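/- At the right endpoint x = b, the symmetric partial sums S_N(b) = ∑_{n=−N}^{N} C_n (f_n(b), g_n(b)) converge as N → ∞ to the vector (1/2)·[[1 − cos 2β, −sin 2β], [−sin 2β, 1 + cos 2β]]·(F₁(b), F₂(b))ᵀ, i.e., to (sin²β·F₁(b) − sin β cos β·F₂(b), −sin β cos β·F₁(b) + cos²β·F₂(b)). -/

import Mathlib

/-- The pair `(f,g)`, continuously differentiable on `[a,b]`, satisfies the
Dirac-type system with parameter `lam`:
`-g' + t g + (p - lam ρ) f = 0` and `f' + t f + (q - lam ρ) g = 0` on `[a,b]`. -/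
def SatisfiesDiracSystem (a b : ℝ) (p q t ρ : ℝ → ℝ) (lam : ℝ) (f g : ℝ → ℝ) : Prop :=
  ∃ f' g' : ℝ → ℝ,
    (∀ x ∈ Set.Icc a b, HasDerivWithinAt f (f' x) (Set.Icc a b) x) ∧
    (∀ x ∈ Set.Icc a b, HasDerivWithinAt g (g' x) (Set.Icc a b) x) ∧
    ContinuousOn f' (Set.Icc a b) ∧ ContinuousOn g' (Set.Icc a b) ∧
    (∀ x ∈ Set.Icc a b, -g' x + t x * g x + (p x - lam * ρ x) * f x = 0) ∧
    (∀ x ∈ Set.Icc a b, f' x + t x * f x + (q x - lam * ρ x) * g x = 0)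

/-- The separated boundary conditions
`f(a) cos α + g(a) sin α = 0` and `f(b) cos β + g(b) sin β = 0`. -/
def DiracBC (a b α β : ℝ) (f g : ℝ → ℝ) : Prop :=
  f a * Real.cos α + g a * Real.sin α = 0 ∧
  f b * Real.cos β + g b * Real.sin β = 0

/-- `lam` is an eigenvalue of the Dirac-type boundary-value problem. -/
def IsDiracEigenvalue (a b : ℝ) (p q t ρ : ℝ → ℝ) (α β lam : ℝ) : Prop :=
  ∃ f g : ℝ → ℝ,
    SatisfiesDiracSystem a b p q t ρ lam f g ∧
    (∃ x ∈ Set.Icc a b, (f x ≠ 0 ∨ g x ≠ 0)) ∧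
    DiracBC a b α β f g

section DiracProof

open Set Filter Topology MeasureTheory Complex
open scoped NNReal ComplexConjugate

/-- Global data of the (extended) Dirac system in complex form. -/
structure DDat where
  a : ℝ
  b : ℝ
  hab : a < b
  ρ : ℝ → ℝ
  m : ℝ → ℝ
  G : ℝ → ℂ
  G' : ℝ → ℂ
  α : ℝ
  hρ : Continuous ρ
  ρpos : ∀ x, 0 < ρ x
  hm : Continuous m
  hG : ∀ x, HasDerivAt G (G' x) x
  hG' : Continuous G'

namespace DDat
noncomputable section
variable (D : DDat)

def τ (x : ℝ) : ℂ := D.G x * D.ρ x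
def ξ (x : ℝ) : ℝ := ∫ s in D.a..x, D.ρ s
def κ (x : ℝ) : ℝ := ∫ s in D.a..x, D.m s
def ph (lam x : ℝ) : ℝ := -D.α + lam * D.ξ x - D.κ x

lemma cG : Continuous D.G := continuous_iff_continuousAt.2 fun x => (D.hG x).continuousAt
lemma cτ : Continuous D.τ := by
  have := D.cG; have := D.hρ; unfold τ; fun_prop
lemma hξ (x : ℝ) : HasDerivAt D.ξ (D.ρ x) x :=
  intervalIntegral.integral_hasDerivAt_right (D.hρ.intervalIntegrable _ _)
    (D.hρ.stronglyMeasurableAtFilter _ _) D.hρ.continuousAt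
lemma hκ (x : ℝ) : HasDerivAt D.κ (D.m x) x :=
  intervalIntegral.integral_hasDerivAt_right (D.hm.intervalIntegrable _ _)
    (D.hm.stronglyMeasurableAtFilter _ _) D.hm.continuousAt
lemma cξ : Continuous D.ξ := continuous_iff_continuousAt.2 fun x => (D.hξ x).continuousAt
lemma cκ : Continuous D.κ := continuous_iff_continuousAt.2 fun x => (D.hκ x).continuousAt
lemma cph (lam : ℝ) : Continuous (D.ph lam) := by
  have := D.cξ; have := D.cκ; unfold ph; fun_prop
lemma hph (lam x : ℝ) : HasDerivAt (D.ph lam) (lam * D.ρ x - D.m x) x := by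
  unfold ph
  exact (((D.hξ x).const_mul lam).const_add _).sub (D.hκ x)
@[simp] lemma ξa : D.ξ D.a = 0 := by simp [ξ]
@[simp] lemma κa : D.κ D.a = 0 := by simp [κ]

/-- continuous functions are bounded on the interval -/
lemma bdd {E : Type*} [NormedAddCommGroup E] {u : ℝ → E} (hu : Continuous u) :
    ∃ M : ℝ, 0 < M ∧ ∀ x ∈ Icc D.a D.b, ‖u x‖ ≤ M := by
  obtain ⟨M, hM⟩ := (isCompact_Icc (a := D.a) (b := D.b)).exists_bound_of_continuousOn hu.continuousOn
  exact ⟨max M 1, by positivity, fun x hx => (hM x hx).trans (le_max_left _ _)⟩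

lemma lip_exp (s t : ℝ) : ‖cexp (-2 * I * s) - cexp (-2 * I * t)‖ ≤ 2 * |s - t| := by
  have h1 : cexp (-2 * I * s) - cexp (-2 * I * t)
      = cexp (-2 * I * t) * (cexp (I * ((-2 * (s - t) : ℝ))) - 1) := by
    rw [mul_sub, ← Complex.exp_add]; congr 1
    · congr 1; push_cast; ring
    · ring
  have h2 : ‖cexp (-2 * I * t)‖ = 1 := by
    rw [show (-2 * I * t : ℂ) = ((-2 * t : ℝ) : ℂ) * I by push_cast; ring, Complex.norm_exp_ofReal_mul_I]
  rw [h1, norm_mul, h2, one_mul]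
  refine (Real.norm_exp_I_mul_ofReal_sub_one_le).trans ?_
  rw [Real.norm_eq_abs, abs_mul]; norm_num

lemma nexp (s : ℝ) : ‖cexp (-2 * I * s)‖ = 1 := by
  rw [show (-2 * I * s : ℂ) = ((-2 * s : ℝ) : ℂ) * I by push_cast; ring, Complex.norm_exp_ofReal_mul_I]

lemma exists_W (lam : ℝ) : ∃ w : ℝ → ℂ, w D.a = 0 ∧ Continuous w ∧
    ∀ x ∈ Icc D.a D.b,
      HasDerivAt w (D.τ x * cexp (-2 * I * ((D.ph lam x + (w x).im : ℝ) : ℂ))) x := by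
  obtain ⟨M, hM0, hM⟩ := D.bdd D.cτ
  have hab := D.hab
  let v : ℝ → ℂ → ℂ := fun x w => D.τ x * cexp (-2 * I * ((D.ph lam x + w.im : ℝ) : ℂ))
  let Mn : ℝ≥0 := ⟨M, hM0.le⟩
  let Ln : ℝ≥0 := ⟨M * (D.b - D.a), by have := D.hab; have : 0 ≤ D.b - D.a := by linarith
                                       positivity⟩
  have hv : IsPicardLindelof v (tmin := D.a) (tmax := D.b) ⟨D.a, le_rfl, D.hab.le⟩ 0 Ln 0 Mn
      (2 * Mn) := by
    constructor
    · intro x hx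
      refine (LipschitzWith.of_dist_le_mul fun w1 w2 => ?_).lipschitzOnWith
      simp only [v, dist_eq_norm]
      rw [← mul_sub, norm_mul]
      have h1 := lip_exp (D.ph lam x + w1.im) (D.ph lam x + w2.im)
      have h2 : |D.ph lam x + w1.im - (D.ph lam x + w2.im)| ≤ ‖w1 - w2‖ := by
        have := Complex.abs_im_le_norm (w1 - w2)
        simpa using this
      have h3 := hM x hx
      have : ((2 * Mn : ℝ≥0) : ℝ) = 2 * M := rfl
      rw [this]
      calc _ ≤ M * (2 * ‖w1 - w2‖) := by gcongr; linarith
        _ = _ := by ring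
    · intro w _
      have := D.cτ; have := D.cph lam
      apply Continuous.continuousOn
      simp only [v]; fun_prop
    · intro x hx w _
      simp only [v, norm_mul, nexp, mul_one]
      exact hM x hx
    · have h0 : max (D.b - D.a) (D.a - D.a) = D.b - D.a := by
        rw [sub_self]; exact max_eq_left (by linarith)
      change M * max (D.b - D.a) (D.a - D.a) ≤ M * (D.b - D.a) - 0
      rw [h0, sub_zero]
  obtain ⟨w0, hw0, hw⟩ := hv.exists_eq_forall_mem_Icc_hasDerivWithinAt₀
  have hw0' : w0 D.a = 0 := hw0
  have cw0 : ContinuousOn w0 (Icc D.a D.b) := fun x hx => (hw x hx).continuousWithinAt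
  let w1 : ℝ → ℂ := IccExtend hab.le ((Icc D.a D.b).domRestrict w0)
  have cw1 : Continuous w1 := (continuousOn_iff_continuous_domRestrict.1 cw0).Icc_extend'
  have e1 : ∀ x ∈ Icc D.a D.b, w1 x = w0 x := fun x hx => IccExtend_of_mem _ _ hx
  have cV : Continuous (fun x => v x (w1 x)) := by
    have := D.cτ; have := D.cph lam
    simp only [v]; fun_prop
  let w : ℝ → ℂ := fun x => ∫ s in D.a..x, v s (w1 s)
  have dw : ∀ x, HasDerivAt w (v x (w1 x)) x := fun x =>
    intervalIntegral.integral_hasDerivAt_right (cV.intervalIntegrable _ _)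
    (cV.stronglyMeasurableAtFilter _ _) cV.continuousAt
  have ew : ∀ x ∈ Icc D.a D.b, w x = w0 x := by
    intro x hx
    have : w x = ∫ s in D.a..x, v s (w0 s) := by
      apply intervalIntegral.integral_congr
      intro s hs
      rw [uIcc_of_le hx.1] at hs
      simp only
      rw [e1 s ⟨hs.1, hs.2.trans hx.2⟩]
    rw [this, intervalIntegral.integral_eq_sub_of_hasDerivAt_of_le (f := w0) hx.1, hw0', sub_zero]
    · exact cw0.mono (Icc_subset_Icc le_rfl hx.2)
    · intro s hs
      exact (hw s ⟨hs.1.le, hs.2.le.trans hx.2⟩).hasDerivAt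
        (Icc_mem_nhds hs.1 (hs.2.trans_le hx.2))
    · have : ContinuousOn (fun s => v s (w1 s)) (uIcc D.a x) := cV.continuousOn
      refine (this.congr ?_).intervalIntegrable
      intro s hs
      rw [uIcc_of_le hx.1] at hs
      simp only
      rw [e1 s ⟨hs.1, hs.2.trans hx.2⟩]
  refine ⟨w, by simp [w], continuous_iff_continuousAt.2 fun x => (dw x).continuousAt, ?_⟩
  intro x hx
  have := dw x
  rw [e1 x hx, ← ew x hx] at this
  exact this

def W (lam : ℝ) : ℝ → ℂ := (D.exists_W lam).choose
lemma Wa (lam : ℝ) : D.W lam D.a = 0 := (D.exists_W lam).choose_spec.1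
lemma cW (lam : ℝ) : Continuous (D.W lam) := (D.exists_W lam).choose_spec.2.1
/-- The Prüfer phase. -/
def phi (lam x : ℝ) : ℝ := D.ph lam x + (D.W lam x).im
lemma cphi (lam : ℝ) : Continuous (D.phi lam) := by
  have := D.cph lam; have := D.cW lam; unfold phi; fun_prop
lemma hW (lam : ℝ) {x : ℝ} (hx : x ∈ Icc D.a D.b) :
    HasDerivAt (D.W lam) (D.τ x * cexp (-2 * I * D.phi lam x)) x :=
  (D.exists_W lam).choose_spec.2.2 x hx
lemma phia (lam : ℝ) : D.phi lam D.a = -D.α := by simp [phi, ph, Wa]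
lemma hphi (lam : ℝ) {x : ℝ} (hx : x ∈ Icc D.a D.b) :
    HasDerivAt (D.phi lam) (lam * D.ρ x - D.m x + (D.τ x * cexp (-2 * I * D.phi lam x)).im) x := by
  have h := (D.hW lam hx)
  have h2 : HasDerivAt (fun y => (D.W lam y).im) (D.τ x * cexp (-2 * I * D.phi lam x)).im x :=
    (Complex.imCLM.hasFDerivAt.comp_hasDerivAt x h)
  exact (D.hph lam x).add h2
/-- The solution with Prüfer phase `phi`. -/
def Z (lam x : ℝ) : ℂ := cexp (I * D.ph lam x + D.W lam x)
lemma cZ (lam : ℝ) : Continuous (D.Z lam) := by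
  have := D.cph lam; have := D.cW lam; unfold Z; fun_prop
lemma Z_eq (lam x : ℝ) : D.Z lam x = Real.exp (D.W lam x).re * cexp (I * D.phi lam x) := by
  rw [Complex.ofReal_exp, ← Complex.exp_add, Z]; congr 1
  apply Complex.ext <;> simp [phi]
lemma Z_conj (lam x : ℝ) : conj (D.Z lam x) = cexp (-2 * I * D.phi lam x) * D.Z lam x := by
  rw [Z_eq, map_mul, ← Complex.exp_conj, Complex.conj_ofReal]
  rw [mul_left_comm, ← Complex.exp_add]; congr 2
  simp; ring
lemma hZ (lam : ℝ) {x : ℝ} (hx : x ∈ Icc D.a D.b) :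
    HasDerivAt (D.Z lam)
      (I * (lam * D.ρ x - D.m x) * D.Z lam x + D.τ x * conj (D.Z lam x)) x := by
  have h1 : HasDerivAt (fun y => I * (D.ph lam y : ℂ) + D.W lam y)
      (I * ((lam * D.ρ x - D.m x : ℝ) : ℂ) + D.τ x * cexp (-2 * I * D.phi lam x)) x :=
    ((D.hph lam x).ofReal_comp.const_mul I).add (D.hW lam hx)
  have h2 := h1.cexp
  rw [Z_conj]
  refine h2.congr_deriv ?_
  simp only [Z]; push_cast; ring
lemma Za (lam : ℝ) : D.Z lam D.a = cexp (-(I * D.α)) := by simp [Z, Wa, ph]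
end
end DDat

open Set Filter Topology MeasureTheory Complex
open scoped NNReal ComplexConjugate
namespace DDat
noncomputable section
variable (D : DDat)

lemma mvt {E : Type*} [NormedAddCommGroup E] [NormedSpace ℝ E] {U U' : ℝ → E} {K : ℝ}
    (h : ∀ x ∈ Icc D.a D.b, HasDerivAt U (U' x) x) (hK : ∀ x ∈ Icc D.a D.b, ‖U' x‖ ≤ K)
    {x : ℝ} (hx : x ∈ Icc D.a D.b) : ‖U x - U D.a‖ ≤ K * (D.b - D.a) := by
  have h1 := (convex_Icc D.a D.b).norm_image_sub_le_of_norm_hasDerivWithin_le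
    (fun y hy => (h y hy).hasDerivWithinAt) hK (left_mem_Icc.2 D.hab.le) hx
  have hK0 : 0 ≤ K := (norm_nonneg _).trans (hK x hx)
  refine h1.trans ?_
  gcongr
  rw [Real.norm_eq_abs, abs_of_nonneg (by linarith [hx.1])]
  linarith [hx.2]

lemma W_bound : ∃ C : ℝ, 0 < C ∧ ∀ lam : ℝ, ∀ x ∈ Icc D.a D.b, ‖D.W lam x‖ * (1 + |lam|) ≤ C := by
  obtain ⟨M1, h10, h1⟩ := D.bdd D.cτ
  obtain ⟨M2, h20, h2⟩ := D.bdd D.cG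
  obtain ⟨M3, h30, h3⟩ := D.bdd D.hG'
  obtain ⟨M4, h40, h4⟩ := D.bdd D.hm
  have hab : 0 < D.b - D.a := by linarith [D.hab]
  refine ⟨M1 * (D.b - D.a) + ((M3 + M2 * (M4 + M1)) * (D.b - D.a) + 2 * M2), by positivity, ?_⟩
  intro lam x hx
  have hA : ‖D.W lam x‖ ≤ M1 * (D.b - D.a) := by
    have := D.mvt (fun y hy => D.hW lam hy) (K := M1) (fun y hy => by
      rw [norm_mul, nexp, mul_one]; exact h1 y hy) hx
    rwa [D.Wa, sub_zero] at this
  let e : ℝ → ℂ := fun y => cexp (-2 * I * D.phi lam y)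
  let h : ℝ → ℝ := fun y => - D.m y + (D.τ y * e y).im
  have he : ∀ y ∈ Icc D.a D.b, HasDerivAt e (e y * (-2 * I * ((lam * D.ρ y + h y : ℝ) : ℂ))) y := by
    intro y hy
    have := ((D.hphi lam hy).ofReal_comp.const_mul (-2 * I)).cexp
    refine this.congr_deriv ?_
    simp only [e, h]; push_cast; ring
  have hn : ∀ y, ‖e y‖ = 1 := fun y => nexp _
  have hh : ∀ y ∈ Icc D.a D.b, |h y| ≤ M4 + M1 := by
    intro y hy
    refine (abs_add_le _ _).trans ?_
    rw [abs_neg]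
    refine add_le_add (h4 y hy) ((Complex.abs_im_le_norm _).trans ?_)
    rw [norm_mul, hn, mul_one]; exact h1 y hy
  let U : ℝ → ℂ := fun y => lam * D.W lam y - (I / 2) * (D.G y * e y)
  have hU : ∀ y ∈ Icc D.a D.b, HasDerivAt U (-(I / 2) * (D.G' y * e y) - D.G y * h y * e y) y := by
    intro y hy
    have := ((D.hW lam hy).const_mul (lam : ℂ)).sub (((D.hG y).mul (he y hy)).const_mul (I / 2))
    refine this.congr_deriv ?_
    simp only [e, τ]; push_cast
    linear_combination (D.G y * cexp (-2 * I * D.phi lam y) * (lam * D.ρ y + h y)) * I_sq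
  have hU' : ∀ y ∈ Icc D.a D.b, ‖-(I / 2) * (D.G' y * e y) - D.G y * h y * e y‖
      ≤ M3 + M2 * (M4 + M1) := by
    intro y hy
    refine (norm_sub_le _ _).trans ?_
    simp only [norm_mul, norm_neg, norm_div, hn, Complex.norm_I, mul_one, Complex.norm_real]
    have a1 := h3 y hy
    have a2 := h2 y hy
    have a3 := hh y hy
    have : ‖D.G y‖ * ‖h y‖ ≤ M2 * (M4 + M1) := by
      gcongr; exact a3
    have h5 : ‖(2:ℂ)‖ = 2 := by simp
    rw [h5]; linarith [norm_nonneg (D.G' y)]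
  have hB := D.mvt hU hU' hx
  have hG0 : ∀ y ∈ Icc D.a D.b, ‖(I / 2) * (D.G y * e y)‖ ≤ M2 := by
    intro y hy
    simp only [norm_mul, norm_div, hn, Complex.norm_I, mul_one]
    have h5 : ‖(2:ℂ)‖ = 2 := by simp
    rw [h5]; linarith [h2 y hy, norm_nonneg (D.G y)]
  have hC : ‖(lam : ℂ) * D.W lam x‖ ≤ (M3 + M2 * (M4 + M1)) * (D.b - D.a) + 2 * M2 := by
    have e1 : (lam : ℂ) * D.W lam x = (U x - U D.a) + (I / 2) * (D.G x * e x)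
        - (I / 2) * (D.G D.a * e D.a) := by
      simp only [U, D.Wa]; ring
    rw [e1]
    refine (norm_sub_le _ _).trans ?_
    have := norm_add_le (U x - U D.a) ((I / 2) * (D.G x * e x))
    linarith [hG0 x hx, hG0 D.a (left_mem_Icc.2 D.hab.le)]
  rw [norm_mul, Complex.norm_real, Real.norm_eq_abs] at hC
  nlinarith [norm_nonneg (D.W lam x)]

lemma lip_rhs {lam mu x M : ℝ} (hM : ‖D.τ x‖ ≤ M) :
    |(D.τ x * cexp (-2 * I * D.phi lam x)).im - (D.τ x * cexp (-2 * I * D.phi mu x)).im|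
      ≤ 2 * M * |D.phi lam x - D.phi mu x| := by
  rw [← Complex.sub_im, ← mul_sub]
  refine (Complex.abs_im_le_norm _).trans ?_
  rw [norm_mul]
  have := lip_exp (D.phi lam x) (D.phi mu x)
  calc _ ≤ M * (2 * |D.phi lam x - D.phi mu x|) := by
        gcongr
        exact (norm_nonneg _).trans hM
    _ = _ := by ring

def Phi (lam : ℝ) : ℝ := D.phi lam D.b

lemma Phi_strictMono : StrictMono D.Phi := by
  intro lam mu hlt
  obtain ⟨M, hM0, hM⟩ := D.bdd D.cτ
  let w : ℝ → ℝ := fun x => D.phi mu x - D.phi lam x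
  let w' : ℝ → ℝ := fun x => (mu * D.ρ x - D.m x + (D.τ x * cexp (-2 * I * D.phi mu x)).im)
    - (lam * D.ρ x - D.m x + (D.τ x * cexp (-2 * I * D.phi lam x)).im)
  have hw : ∀ x ∈ Icc D.a D.b, HasDerivAt w (w' x) x := fun x hx =>
    (D.hphi mu hx).sub (D.hphi lam hx)
  have cw : Continuous w := (D.cphi mu).sub (D.cphi lam)
  have wa : w D.a = 0 := by simp [w, phia]
  have hw' : ∀ x ∈ Icc D.a D.b, (mu - lam) * D.ρ x - 2 * M * |w x| ≤ w' x := by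
    intro x hx
    have := (abs_le.1 (D.lip_rhs (lam := mu) (mu := lam) (hM x hx))).1
    simp only [w, w']; linarith
  have hnn : ∀ x ∈ Icc D.a D.b, 0 ≤ w x := by
    intro x hx
    have := image_le_of_deriv_right_lt_deriv_boundary' (f := fun y => - w y) (f' := fun y => - w' y)
      (a := D.a) (b := D.b) cw.neg.continuousOn
      (fun y hy => (hw y (Ico_subset_Icc_self hy)).neg.hasDerivWithinAt)
      (B := fun _ => 0) (B' := fun _ => 0) (by simp [wa]) continuousOn_const
      (fun y _ => hasDerivWithinAt_const _ _ _)
      (fun y hy he => by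
        have h1 := hw' y (Ico_subset_Icc_self hy)
        have h2 : w y = 0 := by linarith
        rw [h2, abs_zero, mul_zero, sub_zero] at h1
        have := mul_pos (sub_pos.2 hlt) (D.ρpos y)
        linarith) hx
    linarith
  have hmono : StrictMonoOn (fun x => Real.exp (2 * M * x) * w x) (Icc D.a D.b) := by
    have hd : ∀ x ∈ Icc D.a D.b, HasDerivAt (fun x => Real.exp (2 * M * x) * w x)
        (Real.exp (2 * M * x) * (2 * M * w x + w' x)) x := by
      intro x hx
      have h1 : HasDerivAt (fun x : ℝ => Real.exp (2 * M * x)) (Real.exp (2 * M * x) * (2 * M)) x := by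
        simpa using ((hasDerivAt_id x).const_mul (2 * M)).exp
      exact (h1.mul (hw x hx)).congr_deriv (by ring)
    apply strictMonoOn_of_deriv_pos (convex_Icc _ _)
    · apply Continuous.continuousOn; fun_prop
    · intro x hx
      rw [interior_Icc] at hx
      have hx' := Ioo_subset_Icc_self hx
      rw [(hd x hx').deriv]
      have h1 := hw' x hx'
      rw [abs_of_nonneg (hnn x hx')] at h1
      have := mul_pos (sub_pos.2 hlt) (D.ρpos x)
      have h3 := Real.exp_pos (2 * M * x)
      apply mul_pos h3; linarith
  have := hmono (left_mem_Icc.2 D.hab.le) (right_mem_Icc.2 D.hab.le) D.hab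
  simp only [wa, mul_zero] at this
  have h3 : 0 < w D.b := by
    by_contra hcon
    have := mul_nonpos_of_nonneg_of_nonpos (Real.exp_pos (2 * M * D.b)).le (not_lt.1 hcon)
    linarith
  simp only [w] at h3
  simp only [Phi]; linarith

lemma Phi_continuous : Continuous D.Phi := by
  obtain ⟨M, hM0, hM⟩ := D.bdd D.cτ
  obtain ⟨R, hR0, hR⟩ := D.bdd D.hρ
  rw [continuous_iff_continuousAt]
  intro lam
  have key : ∀ mu, |D.Phi mu - D.Phi lam| ≤ gronwallBound 0 (2 * M) (|mu - lam| * R) (D.b - D.a) := by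
    intro mu
    have := norm_le_gronwallBound_of_norm_deriv_right_le (f := fun x => D.phi mu x - D.phi lam x)
      (f' := fun x => (mu * D.ρ x - D.m x + (D.τ x * cexp (-2 * I * D.phi mu x)).im)
    - (lam * D.ρ x - D.m x + (D.τ x * cexp (-2 * I * D.phi lam x)).im))
      (δ := 0) (K := 2 * M) (ε := |mu - lam| * R) (a := D.a) (b := D.b)
      ((D.cphi mu).sub (D.cphi lam)).continuousOn
      (fun x hx => ((D.hphi mu (Ico_subset_Icc_self hx)).sub
        (D.hphi lam (Ico_subset_Icc_self hx))).hasDerivWithinAt)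
      (by simp [phia])
      (fun x hx => by
        have hx := Ico_subset_Icc_self hx
        have h1 := D.lip_rhs (lam := mu) (mu := lam) (hM x hx)
        have h2 : |(mu - lam) * D.ρ x| ≤ |mu - lam| * R := by
          rw [abs_mul]; gcongr; exact hR x hx
        rw [Real.norm_eq_abs, Real.norm_eq_abs]
        have e : (mu * D.ρ x - D.m x + (D.τ x * cexp (-2 * I * D.phi mu x)).im)
    - (lam * D.ρ x - D.m x + (D.τ x * cexp (-2 * I * D.phi lam x)).im) = (mu - lam) * D.ρ x
          + ((D.τ x * cexp (-2 * I * D.phi mu x)).im - (D.τ x * cexp (-2 * I * D.phi lam x)).im) := by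
          ring
        rw [e]
        refine (abs_add_le _ _).trans ?_
        linarith) D.b (right_mem_Icc.2 D.hab.le)
    exact this
  rw [ContinuousAt, tendsto_iff_dist_tendsto_zero]
  refine squeeze_zero (fun _ => dist_nonneg) (fun mu => key mu) ?_
  have hc : Continuous (fun mu => gronwallBound 0 (2 * M) (|mu - lam| * R) (D.b - D.a)) :=
    (gronwallBound_continuous_ε 0 (2 * M) (D.b - D.a)).comp (by fun_prop)
  have := hc.tendsto lam
  simpa [gronwallBound_ε0_δ0] using this

def Lam : ℝ := D.ξ D.b
lemma Lam_pos : 0 < D.Lam :=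
  intervalIntegral.intervalIntegral_pos_of_pos (D.hρ.intervalIntegrable _ _) D.ρpos D.hab

lemma Phi_eq (lam : ℝ) : D.Phi lam = -D.α + lam * D.Lam - D.κ D.b + (D.W lam D.b).im := rfl

lemma Phi_surj : Function.Surjective D.Phi := by
  obtain ⟨C, hC0, hC⟩ := D.W_bound
  have hb : ∀ lam, |(D.W lam D.b).im| ≤ C := by
    intro lam
    refine (Complex.abs_im_le_norm _).trans ?_
    have := hC lam D.b (right_mem_Icc.2 D.hab.le)
    nlinarith [norm_nonneg (D.W lam D.b), abs_nonneg lam]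
  have hL := D.Lam_pos
  apply D.Phi_continuous.surjective
  · have : Tendsto (fun lam : ℝ => lam * D.Lam + (-D.α - D.κ D.b - C)) atTop atTop :=
      tendsto_atTop_add_const_right _ _ (tendsto_id.atTop_mul_const hL)
    refine tendsto_atTop_mono (fun lam => ?_) this
    rw [Phi_eq]; linarith [(abs_le.1 (hb lam)).1]
  · have : Tendsto (fun lam : ℝ => lam * D.Lam + (-D.α - D.κ D.b + C)) atBot atBot :=
      tendsto_atBot_add_const_right _ _ (tendsto_id.atBot_mul_const hL)
    refine tendsto_atBot_mono (fun lam => ?_) this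
    rw [Phi_eq]; linarith [(abs_le.1 (hb lam)).2]

lemma Z_ne (lam x : ℝ) : D.Z lam x ≠ 0 := Complex.exp_ne_zero _

/-- solutions satisfying the left boundary condition are multiples of `Z`. -/
lemma prop_Z (lam : ℝ) (z : ℝ → ℂ)
    (hz : ∀ x ∈ Icc D.a D.b, HasDerivWithinAt z
      (I * (lam * D.ρ x - D.m x) * z x + D.τ x * conj (z x)) (Icc D.a D.b) x)
    (h0 : (z D.a * conj (D.Z lam D.a)).im = 0) :
    ∃ c : ℝ, ∀ x ∈ Icc D.a D.b, z x = c * D.Z lam x := by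
  have hcj : ∀ {v : ℝ → ℂ} {v' : ℂ} {x : ℝ}, HasDerivWithinAt v v' (Icc D.a D.b) x →
      HasDerivWithinAt (fun y => conj (v y)) (conj v') (Icc D.a D.b) x := by
    intro v v' x h
    exact (Complex.conjCLE.toContinuousLinearMap.hasFDerivAt.comp_hasDerivWithinAt x h)
  have hconst : ∀ {v : ℝ → ℂ}, (∀ x ∈ Icc D.a D.b, HasDerivWithinAt v 0 (Icc D.a D.b) x) →
      ∀ x ∈ Icc D.a D.b, v x = v D.a := by
    intro v hv x hx
    have := (convex_Icc D.a D.b).norm_image_sub_le_of_norm_hasDerivWithin_le (C := 0)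
      hv (by simp) (left_mem_Icc.2 D.hab.le) hx
    simpa [sub_eq_zero] using this
  have hW : ∀ x ∈ Icc D.a D.b, z x * conj (D.Z lam x) - conj (z x) * D.Z lam x = 0 := by
    intro x hx
    have := hconst (v := fun x => z x * conj (D.Z lam x) - conj (z x) * D.Z lam x) (fun y hy => by
      have hZ := (D.hZ lam hy).hasDerivWithinAt (s := Icc D.a D.b)
      refine (((hz y hy).mul (hcj hZ)).sub ((hcj (hz y hy)).mul hZ)).congr_deriv ?_
      simp only [map_add, map_mul, map_sub, Complex.conj_conj, Complex.conj_I, Complex.conj_ofReal]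
      ring) x hx
    rw [this]
    have e : conj (z D.a) * D.Z lam D.a = conj (z D.a * conj (D.Z lam D.a)) := by simp
    rw [e, Complex.sub_conj, h0]; simp
  have hd : ∀ x ∈ Icc D.a D.b, z x / D.Z lam x = z D.a / D.Z lam D.a := by
    apply hconst (v := fun x => z x / D.Z lam x)
    intro y hy
    have hZ := (D.hZ lam hy).hasDerivWithinAt (s := Icc D.a D.b)
    refine ((hz y hy).div hZ (D.Z_ne lam y)).congr_deriv ?_
    have := hW y hy
    rw [div_eq_zero_iff]; left
    linear_combination (-D.τ y) * this
  refine ⟨(z D.a / D.Z lam D.a).re, fun x hx => ?_⟩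
  have him : (z D.a / D.Z lam D.a).im = 0 := by
    have h1 : z D.a / D.Z lam D.a = (z D.a * conj (D.Z lam D.a)) / (normSq (D.Z lam D.a) : ℝ) := by
      rw [← Complex.mul_conj]
      have := D.Z_ne lam D.a
      have h2 : conj (D.Z lam D.a) ≠ 0 := by simpa using this
      field_simp
    rw [h1, Complex.div_ofReal_im, h0, zero_div]
  have h3 : ((z D.a / D.Z lam D.a).re : ℂ) = z D.a / D.Z lam D.a := by
    apply Complex.ext <;> simp [him]
  rw [h3, ← hd x hx]
  field_simp [D.Z_ne lam x]
end
end DDat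

open Set Filter Topology MeasureTheory Complex
open scoped NNReal ComplexConjugate

/-- An orthonormal family quadratically close to a Hilbert basis is total. -/
lemma bari {H : Type*} [NormedAddCommGroup H] [InnerProductSpace ℝ H] 
    (e : HilbertBasis ℤ ℝ H) (y : ℤ → H) (hy : Orthonormal ℝ y)
    (hs : Summable fun n => ‖y n - e n‖ ^ 2) (u : H) (hu : ∀ n, inner ℝ (y n) u = 0) : u = 0 := by
  by_contra hu0
  obtain ⟨S, hS⟩ : ∃ S : Finset ℤ, ∑' n : {n // n ∉ S}, ‖y n - e n‖ ^ 2 < 1 := by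
    have := tendsto_tsum_compl_atTop_zero (fun n : ℤ => ‖y n - e n‖ ^ 2)
    exact ((tendsto_order.1 this).2 1 one_pos).exists
  -- a family of card S + 1 orthogonal vectors
  let v : Option S → H := fun o => o.elim u (fun n => y n)
  have hv : LinearIndependent ℝ v := by
    apply linearIndependent_of_ne_zero_of_inner_eq_zero
    · rintro (_ | n)
      · exact hu0
      · exact hy.ne_zero n
    · rintro (_ | n) (_ | k) hnk
      · exact absurd rfl hnk
      · simp only [v, Option.elim]; rw [real_inner_comm]; exact hu k
      · exact hu n
      · simp only [v, Option.elim]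
        refine hy.2 fun h => hnk ?_
        rw [Subtype.ext h]
  let T : (Option S → ℝ) →ₗ[ℝ] (S → ℝ) :=
    LinearMap.pi fun k => (innerₛₗ ℝ (e k)).comp (Fintype.linearCombination ℝ v)
  have hker : LinearMap.ker T ≠ ⊥ := LinearMap.ker_ne_bot_of_finrank_lt (by simp)
  obtain ⟨c, hc, hc0⟩ := Submodule.exists_mem_ne_zero_of_ne_bot hker
  set x : H := Fintype.linearCombination ℝ v c with hx
  have hx0 : x ≠ 0 := by
    intro h
    apply hc0
    have := (Fintype.linearIndependent_iff.1 hv) c (by rw [← Fintype.linearCombination_apply]; exact h)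
    exact funext this
  have h1 : ∀ k ∈ S, inner ℝ (e k) x = 0 := by
    intro k hk
    exact congrFun (LinearMap.mem_ker.1 hc) ⟨k, hk⟩
  have h2 : ∀ n ∉ S, inner ℝ (y n) x = 0 := by
    intro n hn
    rw [hx, Fintype.linearCombination_apply, inner_sum]
    apply Finset.sum_eq_zero
    rintro (_ | k) _
    · simp only [v, Option.elim]; rw [inner_smul_right, hu, mul_zero]
    · simp only [v, Option.elim]; rw [inner_smul_right, hy.2, mul_zero]
      rintro rfl; exact hn k.2
  have hP := e.hasSum_inner_mul_inner x x
  let g : ℤ → ℝ := fun n => ({n | n ∉ S} : Set ℤ).indicator (fun n => ‖y n - e n‖ ^ 2) n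
  have hg : Summable g := hs.indicator _
  have hgs : ∑' n, g n < 1 := by
    rw [← tsum_subtype ({n | n ∉ S} : Set ℤ) (fun n => ‖y n - e n‖ ^ 2)]; exact hS
  have hle : ∀ n, inner ℝ x (e n) * inner ℝ (e n) x ≤ g n * ‖x‖ ^ 2 := by
    intro n
    by_cases hn : n ∈ S
    · rw [h1 n hn]; simp [g, hn]
    · have e1 : inner ℝ (e n) x = - inner ℝ (y n - e n) x := by
        rw [inner_sub_left, h2 n hn]; ring
      have e2 : |inner ℝ (y n - e n) x| ≤ ‖y n - e n‖ * ‖x‖ := abs_real_inner_le_norm _ _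
      have e3 : g n = ‖y n - e n‖ ^ 2 := by simp [g, hn]
      rw [real_inner_comm, e1, e3, ← mul_pow]
      have := pow_le_pow_left₀ (abs_nonneg _) e2 2
      rw [sq_abs] at this
      nlinarith
  have h3 := hasSum_le hle hP (hg.hasSum.mul_right _)
  rw [real_inner_self_eq_norm_sq] at h3
  have : 0 < ‖x‖ ^ 2 := by have := norm_pos_iff.2 hx0; positivity
  nlinarith

open Set Filter Topology MeasureTheory Complex
open scoped NNReal ComplexConjugate

lemma sw_zero (a b : ℝ) (c : ℝ → ℝ) (hc : Continuous c) (hinj : InjOn c (Icc a b))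
    (B : ℝ → ℝ) (hB : IntegrableOn B (Ioc a b))
    (h : ∀ k : ℕ, ∫ x in Ioc a b, c x ^ k * B x = 0) :
    ∀ᵐ x, x ∈ Ioo a b → B x = 0 := by
  have hbd : ∀ φ : ℝ → ℝ, Continuous φ → IntegrableOn (fun x => φ x * B x) (Ioc a b) := by
    intro φ hφ
    obtain ⟨M, hM⟩ := (isCompact_Icc (a := a) (b := b)).exists_bound_of_continuousOn hφ.continuousOn
    refine Integrable.bdd_mul (c := M) hB hφ.aestronglyMeasurable ?_
    filter_upwards [ae_restrict_mem measurableSet_Ioc] with x hx using hM x (Ioc_subset_Icc_self hx)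
  have hpoly : ∀ P : Polynomial ℝ, ∫ x in Ioc a b, P.eval (c x) * B x = 0 := by
    intro P
    induction P using Polynomial.induction_on' with
    | add p q hp hq =>
      simp only [Polynomial.eval_add, add_mul]
      rw [integral_add (hbd _ (by fun_prop)) (hbd _ (by fun_prop)), hp, hq, add_zero]
    | monomial n r =>
      simp only [Polynomial.eval_monomial, mul_assoc]
      rw [integral_const_mul, h, mul_zero]
  have hcont : ∀ φ : ℝ → ℝ, Continuous φ → ∫ x in Ioc a b, φ x * B x = 0 := by
    intro φ hφ
    let cc : C(Icc a b, ℝ) := ⟨fun x => c x, by fun_prop⟩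
    have hsep : (Algebra.adjoin ℝ {cc}).SeparatesPoints := by
      intro x y hxy
      refine ⟨cc, ⟨cc, Algebra.subset_adjoin rfl, rfl⟩, ?_⟩
      intro he
      exact hxy (Subtype.ext (hinj x.2 y.2 he))
    have key : ∀ ε > 0, |∫ x in Ioc a b, φ x * B x| ≤ ε * ∫ x in Ioc a b, |B x| := by
      intro ε hε
      obtain ⟨⟨g, hg⟩, hgε⟩ := ContinuousMap.exists_mem_subalgebra_near_continuous_of_separatesPoints
        _ hsep (fun x => φ x) (by fun_prop) ε hε
      rw [Algebra.adjoin_singleton_eq_range_aeval] at hg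
      obtain ⟨P, hP⟩ := hg
      have hgP : ∀ x : Icc a b, g x = P.eval (c x) := by
        intro x
        have : g = Polynomial.aeval cc P := hP.symm
        rw [this, Polynomial.aeval_continuousMap_apply]
        simp [cc]
      have e : ∫ x in Ioc a b, φ x * B x = ∫ x in Ioc a b, (φ x - P.eval (c x)) * B x := by
        simp only [sub_mul]
        rw [integral_sub (hbd _ hφ) (hbd _ (by fun_prop)), hpoly, sub_zero]
      rw [e, ← integral_const_mul, ← Real.norm_eq_abs]
      apply norm_integral_le_of_norm_le (hB.abs.const_mul ε)
      filter_upwards [ae_restrict_mem measurableSet_Ioc] with x hx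
      rw [norm_mul, Real.norm_eq_abs (B x)]
      gcongr
      have := hgε ⟨x, Ioc_subset_Icc_self hx⟩
      simp only at this
      rw [hgP, norm_sub_rev] at this
      exact this.le
    have h0 : |∫ x in Ioc a b, φ x * B x| ≤ 0 := by
      apply le_of_forall_pos_le_add
      intro η hη
      have hI : 0 ≤ ∫ x in Ioc a b, |B x| := integral_nonneg fun _ => abs_nonneg _
      have := key (η / (1 + ∫ x in Ioc a b, |B x|)) (by positivity)
      refine this.trans ?_
      rw [zero_add, div_mul_eq_mul_div, div_le_iff₀ (by positivity)]
      nlinarith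
    exact abs_nonpos_iff.1 h0
  refine isOpen_Ioo.ae_eq_zero_of_integral_contDiff_smul_eq_zero
    ((hB.mono_set Ioo_subset_Ioc_self).locallyIntegrableOn) ?_
  intro g hg _ hsupp
  have := hcont g hg.continuous
  rw [← this, ← integral_indicator measurableSet_Ioc]
  congr 1; ext x
  by_cases hx : x ∈ Ioc a b
  · simp [hx]
  · have : g x = 0 := by
      by_contra h0
      exact hx (Ioo_subset_Ioc_self (hsupp (subset_tsupport _ h0)))
    simp [hx, this]

namespace DDat
noncomputable section
variable (D : DDat)

def mu : Measure ℝ := volume.restrict (Ioc D.a D.b)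
instance : IsFiniteMeasure D.mu := by unfold mu; infer_instance
abbrev H := Lp ℂ 2 D.mu
def wt (u : ℝ → ℂ) (x : ℝ) : ℂ := (Real.sqrt (D.ρ x) : ℂ) * u x
/-- weighted real inner product -/
def ip (u v : ℝ → ℂ) : ℝ := ∫ x in D.a..D.b, D.ρ x * (v x * conj (u x)).re

lemma memL {u : ℝ → ℂ} (hu : AEStronglyMeasurable u D.mu) (C : ℝ)
    (hC : ∀ x ∈ Ioo D.a D.b, ‖u x‖ ≤ C) : MemLp (D.wt u) 2 D.mu := by
  have hc : Continuous fun x => (Real.sqrt (D.ρ x) : ℂ) := by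
    have := D.hρ; fun_prop
  obtain ⟨M, hM0, hM⟩ := D.bdd hc
  refine MemLp.of_bound (hc.aestronglyMeasurable.mul hu) (M * C) ?_
  have hb : ∀ᵐ x ∂D.mu, x ≠ D.b := by
    unfold mu
    exact ae_restrict_of_ae (by simp [ae_iff])
  have hmem : ∀ᵐ x ∂D.mu, x ∈ Ioc D.a D.b := ae_restrict_mem measurableSet_Ioc
  filter_upwards [hb, hmem] with x hx1 hx2
  have hx : x ∈ Ioo D.a D.b := ⟨hx2.1, lt_of_le_of_ne hx2.2 hx1⟩
  change ‖_ * _‖ ≤ _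
  rw [norm_mul]
  exact mul_le_mul (hM x (Ioo_subset_Icc_self hx)) (hC x hx) (norm_nonneg _) hM0.le

lemma memC {u : ℝ → ℂ} (hu : Continuous u) : MemLp (D.wt u) 2 D.mu := by
  obtain ⟨M, hM0, hM⟩ := D.bdd hu
  exact D.memL hu.aestronglyMeasurable M fun x hx => hM x (Ioo_subset_Icc_self hx)

lemma inner_vec {u v : ℝ → ℂ} (hu : MemLp (D.wt u) 2 D.mu) (hv : MemLp (D.wt v) 2 D.mu) :
    inner ℝ (hu.toLp) (hv.toLp) = D.ip u v := by
  rw [L2.inner_def, ip, intervalIntegral.integral_of_le D.hab.le]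
  apply integral_congr_ae
  filter_upwards [hu.coeFn_toLp, hv.coeFn_toLp] with x h1 h2
  rw [h1, h2, Complex.inner, wt, wt, map_mul, Complex.conj_ofReal]
  have : (Real.sqrt (D.ρ x) : ℂ) * v x * ((Real.sqrt (D.ρ x) : ℂ) * conj (u x))
     = (D.ρ x : ℂ) * (v x * conj (u x)) := by
    have h3 : (Real.sqrt (D.ρ x) : ℂ) * (Real.sqrt (D.ρ x) : ℂ) = D.ρ x := by
      rw [← Complex.ofReal_mul, Real.mul_self_sqrt (D.ρpos x).le]
    linear_combination (v x * conj (u x)) * h3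
  rw [this, Complex.re_ofReal_mul]

def X (x : ℝ) : ℝ := Real.pi * D.ξ x / D.Lam
lemma cX : Continuous D.X := by have := D.cξ; unfold X; fun_prop
@[simp] lemma Xa : D.X D.a = 0 := by simp [X]
@[simp] lemma Xb : D.X D.b = Real.pi := by
  have := D.Lam_pos.ne'
  simp only [X]; rw [← Lam]; field_simp
lemma hX (x : ℝ) : HasDerivAt D.X (Real.pi * D.ρ x / D.Lam) x :=
  ((D.hξ x).const_mul _).div_const _
lemma X_mono : StrictMono D.X := by
  apply strictMono_of_deriv_pos
  intro x
  rw [(D.hX x).deriv]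
  have := D.ρpos x; have := D.Lam_pos; positivity
/-- free exponentials -/
def E (δ : ℝ) (n : ℤ) (x : ℝ) : ℂ := cexp (I * D.ph ((n * Real.pi + δ) / D.Lam) x)
lemma cE (δ : ℝ) (n : ℤ) : Continuous (D.E δ n) := by
  have := D.cph ((n * Real.pi + δ) / D.Lam); unfold E; fun_prop
lemma E_eq (δ : ℝ) (n : ℤ) (x : ℝ) : D.E δ n x = cexp (I * ((n * D.X x : ℝ) : ℂ)) * D.E δ 0 x := by
  rw [E, E, ← Complex.exp_add]; congr 1
  have := D.Lam_pos.ne'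
  rw [← mul_add, ← Complex.ofReal_add]; congr 2
  simp only [ph, X]; push_cast; field_simp; ring
lemma E_norm (δ : ℝ) (n : ℤ) (x : ℝ) : ‖D.E δ n x‖ = 1 := by
  rw [E, mul_comm]; exact Complex.norm_exp_ofReal_mul_I _

lemma int_cos (j : ℤ) (hj : j ≠ 0) : ∫ x in D.a..D.b, D.ρ x * Real.cos (j * D.X x) = 0 := by
  have hL := D.Lam_pos.ne'
  have hp := Real.pi_ne_zero
  have hj' : (j : ℝ) ≠ 0 := by exact_mod_cast hj
  have h : ∀ x, HasDerivAt (fun x => D.Lam / (j * Real.pi) * Real.sin (j * D.X x))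
      (D.ρ x * Real.cos (j * D.X x)) x := by
    intro x
    refine ((((D.hX x).const_mul (j : ℝ)).sin).const_mul _).congr_deriv ?_
    field_simp
  rw [intervalIntegral.integral_eq_sub_of_hasDerivAt (fun x _ => h x)]
  · simp [Real.sin_int_mul_pi]
  · have := D.hρ; have := D.cX
    exact Continuous.intervalIntegrable (by fun_prop) _ _

lemma ip_E (δ : ℝ) (n k : ℤ) : D.ip (D.E δ n) (D.E δ k) = if n = k then D.Lam else 0 := by
  have e : ∀ x, (D.E δ k x * conj (D.E δ n x)).re = Real.cos (((k - n : ℤ) : ℝ) * D.X x) := by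
    intro x
    rw [D.E_eq δ k, D.E_eq δ n, map_mul, ← Complex.exp_conj]
    have h1 : D.E δ 0 x * conj (D.E δ 0 x) = 1 := by
      rw [Complex.mul_conj, Complex.normSq_eq_norm_sq, E_norm]; simp
    have h2 : ∀ p q : ℂ, p * D.E δ 0 x * (q * conj (D.E δ 0 x)) = p * q := by
      intro p q; linear_combination p * q * h1
    rw [h2, ← Complex.exp_add, ← Complex.exp_ofReal_mul_I_re]
    congr 2
    simp; ring
  simp only [ip, e]
  split_ifs with h
  · subst h; simp [Lam, ξ]
  · exact D.int_cos _ (by omega)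
end
end DDat

open Set Filter Topology MeasureTheory Complex
open scoped NNReal ComplexConjugate
namespace DDat
noncomputable section
variable (D : DDat)

def vec (u : ℝ → ℂ) (hu : Continuous u) : D.H := (D.memC hu).toLp

lemma inner_vecC {u v : ℝ → ℂ} (hu : Continuous u) (hv : Continuous v) :
    inner ℝ (D.vec u hu) (D.vec v hv) = D.ip u v := D.inner_vec _ _

def nE (δ : ℝ) (n : ℤ) : D.H := (Real.sqrt D.Lam)⁻¹ • D.vec (D.E δ n) (D.cE δ n)

lemma nE_orth (δ : ℝ) : Orthonormal ℝ (D.nE δ) := by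
  rw [orthonormal_iff_ite]
  intro n k
  have hL := D.Lam_pos
  have h1 : Real.sqrt D.Lam * Real.sqrt D.Lam = D.Lam := Real.mul_self_sqrt hL.le
  have h2 : 0 < Real.sqrt D.Lam := Real.sqrt_pos.2 hL
  rw [nE, nE, real_inner_smul_left, real_inner_smul_right, inner_vecC, ip_E]
  split_ifs
  · field_simp; nlinarith
  · simp

lemma step_zero (B : ℝ → ℝ) (hB : Integrable B D.mu) (s : ℤ → ℝ → ℝ) (hs : ∀ n, Continuous (s n))
    (hrec : ∀ n x, Real.cos (D.X x) * s n x = (s (n + 1) x + s (n - 1) x) / 2)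
    (h : ∀ n, ∫ x, s n x * B x ∂D.mu = 0) (n : ℤ) :
    ∀ᵐ x, x ∈ Ioo D.a D.b → s n x * B x = 0 := by
  have hbd : ∀ φ : ℝ → ℝ, Continuous φ → Integrable (fun x => φ x * B x) D.mu := by
    intro φ hφ
    obtain ⟨M, hM0, hM⟩ := D.bdd hφ
    refine Integrable.bdd_mul (c := M) hB hφ.aestronglyMeasurable ?_
    have : ∀ᵐ x ∂D.mu, x ∈ Ioc D.a D.b := ae_restrict_mem measurableSet_Ioc
    filter_upwards [this] with x hx using hM x (Ioc_subset_Icc_self hx)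
  have cc : Continuous fun x => Real.cos (D.X x) := Real.continuous_cos.comp D.cX
  have key : ∀ k : ℕ, ∀ n, ∫ x, Real.cos (D.X x) ^ k * s n x * B x ∂D.mu = 0 := by
    intro k
    induction k with
    | zero => intro n; simpa using h n
    | succ k ih =>
      intro n
      have e : ∀ x, Real.cos (D.X x) ^ (k + 1) * s n x * B x
          = (1 / 2) * ((Real.cos (D.X x) ^ k * s (n + 1) x * B x)
            + (Real.cos (D.X x) ^ k * s (n - 1) x * B x)) := by
        intro x
        have := hrec n x
        rw [pow_succ]
        linear_combination Real.cos (D.X x) ^ k * B x * this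
      simp only [e]
      rw [integral_const_mul, integral_add, ih, ih]
      · simp
      · exact hbd _ ((cc.pow k).mul (hs _))
      · exact hbd _ ((cc.pow k).mul (hs _))
  apply sw_zero D.a D.b (fun x => Real.cos (D.X x)) cc
  · have h1 : MapsTo D.X (Icc D.a D.b) (Icc 0 Real.pi) := by
      intro x hx
      have := D.X_mono.monotone hx.1
      have := D.X_mono.monotone hx.2
      simp at *; constructor <;> assumption
    exact Real.injOn_cos.comp D.X_mono.injective.injOn h1
  · exact hbd _ (hs n)
  · intro k
    have := key k n
    simp only [mul_assoc] at this
    exact this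

lemma E_total (δ : ℝ) (h : D.H) (hh : ∀ n, inner ℝ (D.nE δ n) h = 0) : h = 0 := by
  have hL := D.Lam_pos
  have h2 : 0 < Real.sqrt D.Lam := Real.sqrt_pos.2 hL
  -- integrability
  have hIntegr : Integrable (fun x => h x) D.mu := (Lp.memLp h).integrable (by norm_num)
  let q : ℝ → ℂ := fun x => (Real.sqrt (D.ρ x) : ℂ) * conj (D.E δ 0 x)
  have cq : Continuous q := by
    have := D.hρ; have := D.cE δ 0
    have : Continuous fun x => conj (D.E δ 0 x) := Complex.continuous_conj.comp this
    simp only [q]; fun_prop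
  let h1 : ℝ → ℂ := fun x => q x * h x
  have hmem : ∀ᵐ x ∂D.mu, x ∈ Ioc D.a D.b := ae_restrict_mem measurableSet_Ioc
  have hi1 : Integrable h1 D.mu := by
    obtain ⟨M, hM0, hM⟩ := D.bdd cq
    refine Integrable.bdd_mul (c := M) hIntegr cq.aestronglyMeasurable ?_
    filter_upwards [hmem] with x hx using hM x (Ioc_subset_Icc_self hx)
  have hA : Integrable (fun x => (h1 x).re) D.mu := hi1.re
  have hB : Integrable (fun x => (h1 x).im) D.mu := hi1.im
  have hbd : ∀ (φ B : ℝ → ℝ), Continuous φ → Integrable B D.mu → Integrable (fun x => φ x * B x) D.mu := by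
    intro φ B hφ hB
    obtain ⟨M, hM0, hM⟩ := D.bdd hφ
    refine Integrable.bdd_mul (c := M) hB hφ.aestronglyMeasurable ?_
    filter_upwards [hmem] with x hx using hM x (Ioc_subset_Icc_self hx)
  have cX := D.cX
  have hz : ∀ n : ℤ, (∫ x, Real.cos (n * D.X x) * (h1 x).re ∂D.mu)
      + ∫ x, Real.sin (n * D.X x) * (h1 x).im ∂D.mu = 0 := by
    intro n
    have := hh n
    rw [nE, real_inner_smul_left, mul_eq_zero, L2.inner_def] at this
    have := this.resolve_left (by positivity)
    rw [← integral_add (hbd _ _ (by fun_prop) hA) (hbd _ _ (by fun_prop) hB), ← this]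
    apply integral_congr_ae
    filter_upwards [(D.memC (D.cE δ n)).coeFn_toLp] with x hx
    rw [vec, hx, Complex.inner, wt, D.E_eq, map_mul, map_mul, ← Complex.exp_conj, Complex.conj_ofReal]
    have e : h x * (↑√(D.ρ x) * (cexp (conj (I * ((n * D.X x : ℝ) : ℂ))) * conj (D.E δ 0 x)))
      = cexp (((-(n * D.X x) : ℝ) : ℂ) * I) * h1 x := by
      simp only [h1, q]
      have : conj (I * ((n * D.X x : ℝ) : ℂ)) = ((-(n * D.X x) : ℝ) : ℂ) * I := by
        simp only [map_mul, Complex.conj_I, Complex.conj_ofReal]; push_cast; ring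
      rw [this]; ring
    rw [e]
    generalize h1 x = v
    rw [Complex.mul_re, Complex.exp_ofReal_mul_I_re, Complex.exp_ofReal_mul_I_im]
    simp
  have hcos : ∀ n : ℤ, ∫ x, Real.cos (n * D.X x) * (h1 x).re ∂D.mu = 0 := by
    intro n
    have e1 := hz n
    have e2 := hz (-n)
    simp only [Int.cast_neg, neg_mul, Real.cos_neg, Real.sin_neg, integral_neg] at e2
    linarith
  have hsin : ∀ n : ℤ, ∫ x, Real.sin (n * D.X x) * (h1 x).im ∂D.mu = 0 := by
    intro n
    linarith [hz n, hcos n]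
  have r1 := D.step_zero _ hA (fun n x => Real.cos (n * D.X x)) (fun n => by fun_prop)
    (fun n x => by
      push_cast
      rw [add_mul, sub_mul, one_mul, Real.cos_add, Real.cos_sub]; ring) hcos 0
  have r2 := D.step_zero _ hB (fun n x => Real.sin (n * D.X x)) (fun n => by fun_prop)
    (fun n x => by
      push_cast
      rw [add_mul, sub_mul, one_mul, Real.sin_add, Real.sin_sub]; ring) hsin 1
  rw [Lp.eq_zero_iff_ae_eq_zero]
  have r1' : ∀ᵐ x ∂D.mu, _ := ae_restrict_of_ae r1
  have r2' : ∀ᵐ x ∂D.mu, _ := ae_restrict_of_ae r2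
  have hb : ∀ᵐ x ∂D.mu, x ≠ D.b := by
    unfold mu
    exact ae_restrict_of_ae (by simp [ae_iff])
  filter_upwards [r1', r2', hmem, hb] with x g1 g2 g3 g4
  have hx : x ∈ Ioo D.a D.b := ⟨g3.1, lt_of_le_of_ne g3.2 g4⟩
  have g1 := g1 hx
  have g2 := g2 hx
  simp only [Int.cast_zero, zero_mul, Real.cos_zero, one_mul, Int.cast_one] at g1 g2
  have hs : 0 < Real.sin (D.X x) := by
    apply Real.sin_pos_of_pos_of_lt_pi
    · have := D.X_mono hx.1; simpa using this
    · have := D.X_mono hx.2; simpa using this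
  have g2 := (mul_eq_zero.1 g2).resolve_left hs.ne'
  have g3 : h1 x = 0 := Complex.ext g1 g2
  simp only [h1, q, mul_eq_zero] at g3
  have e1 : (Real.sqrt (D.ρ x) : ℂ) ≠ 0 := by
    have := Real.sqrt_pos.2 (D.ρpos x)
    exact_mod_cast this.ne'
  have e2 : conj (D.E δ 0 x) ≠ 0 := by
    have := D.E_norm δ 0 x
    intro h0
    rw [← Complex.norm_conj, h0] at this; simp at this
  simpa [e1, e2] using g3

def basisE (δ : ℝ) : HilbertBasis ℤ ℝ D.H :=
  HilbertBasis.mkOfOrthogonalEqBot (D.nE_orth δ) (by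
    rw [Submodule.eq_bot_iff]
    intro h hh
    apply D.E_total δ
    intro n
    exact (Submodule.mem_orthogonal _ _).1 hh _ (Submodule.subset_span ⟨n, rfl⟩))
lemma basisE_coe (δ : ℝ) : ⇑(D.basisE δ) = D.nE δ := HilbertBasis.coe_mkOfOrthogonalEqBot _ _

/-- Riemann-Lebesgue via Bessel. -/
lemma RL (δ : ℝ) {u : ℝ → ℂ} (hu : MemLp (D.wt u) 2 D.mu) :
    Tendsto (fun n : ℤ => D.ip (D.E δ n) u) cofinite (𝓝 0) := by
  have h := (D.nE_orth δ).inner_products_summable (x := hu.toLp)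
  have h1 := h.tendsto_cofinite_zero
  have h2 : 0 < Real.sqrt D.Lam := Real.sqrt_pos.2 D.Lam_pos
  have h3 : ∀ n, D.ip (D.E δ n) u = Real.sqrt D.Lam * inner ℝ (D.nE δ n) hu.toLp := by
    intro n
    rw [nE, real_inner_smul_left, vec, inner_vec]; field_simp
  simp only [h3]
  rw [show (0:ℝ) = Real.sqrt D.Lam * 0 by simp]
  apply Tendsto.const_mul
  rw [tendsto_zero_iff_norm_tendsto_zero]
  have := h1.sqrt
  simpa [Real.sqrt_sq_eq_abs] using this
end
end DDat

open Set Filter Topology MeasureTheory Complex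
open scoped NNReal ComplexConjugate
namespace DDat
noncomputable section
variable (D : DDat)

/-- eigenvalue equation -/
def Eig (δ : ℝ) (lam : ℤ → ℝ) : Prop :=
  ∀ n : ℤ, D.Phi (lam n) = n * Real.pi + δ - D.α - D.κ D.b

def om (δ : ℝ) (n : ℤ) : ℝ := (n * Real.pi + δ) / D.Lam
def dd (n : ℤ) : ℝ := 1 + |(n : ℝ)|
lemma dd_pos (n : ℤ) : 0 < dd n := by unfold dd; positivity
lemma dd_one (n : ℤ) : 1 ≤ dd n := by unfold dd; linarith [abs_nonneg (n : ℝ)]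

variable {D} {δ : ℝ} {lam : ℤ → ℝ}

lemma Eig.eq (h : D.Eig δ lam) (n : ℤ) : lam n * D.Lam + (D.W (lam n) D.b).im = n * Real.pi + δ := by
  have := h n
  rw [D.Phi_eq] at this; linarith

lemma mem_b : D.b ∈ Icc D.a D.b := right_mem_Icc.2 D.hab.le
lemma mem_a : D.a ∈ Icc D.a D.b := left_mem_Icc.2 D.hab.le

lemma Eig.A1 (h : D.Eig δ lam) : ∃ C : ℝ, 0 < C ∧ ∀ n, dd n ≤ C * (1 + |lam n|) := by
  obtain ⟨C, hC0, hC⟩ := D.W_bound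
  have hL := D.Lam_pos
  refine ⟨1 + |δ| + D.Lam + C, by positivity, fun n => ?_⟩
  have h1 := h.eq n
  have h2 := hC (lam n) D.b mem_b
  have h3 : |(D.W (lam n) D.b).im| ≤ C := by
    refine (Complex.abs_im_le_norm _).trans (le_trans ?_ h2)
    nlinarith [norm_nonneg (D.W (lam n) D.b), abs_nonneg (lam n)]
  have h4 : |(n : ℝ)| * Real.pi ≤ |lam n| * D.Lam + C + |δ| := by
    have : (n : ℝ) * Real.pi = lam n * D.Lam + (D.W (lam n) D.b).im - δ := by linarith
    calc |(n : ℝ)| * Real.pi = |(n : ℝ) * Real.pi| := by rw [abs_mul, abs_of_pos Real.pi_pos]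
      _ = |lam n * D.Lam + (D.W (lam n) D.b).im - δ| := by rw [this]
      _ ≤ |lam n * D.Lam + (D.W (lam n) D.b).im| + |δ| := abs_sub _ _
      _ ≤ |lam n * D.Lam| + |(D.W (lam n) D.b).im| + |δ| := by gcongr; exact abs_add_le _ _
      _ ≤ _ := by rw [abs_mul, abs_of_pos hL]; gcongr
  have h5 := Real.pi_gt_three
  unfold dd
  have := abs_nonneg (n : ℝ); have := abs_nonneg δ; have h7 := abs_nonneg (lam n)
  nlinarith [mul_nonneg (abs_nonneg δ) h7, mul_nonneg hC0.le h7]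

lemma Eig.A2 (h : D.Eig δ lam) :
    ∃ C : ℝ, 0 < C ∧ ∀ n, ∀ x ∈ Icc D.a D.b, ‖D.W (lam n) x‖ * dd n ≤ C := by
  obtain ⟨C, hC0, hC⟩ := D.W_bound
  obtain ⟨C1, hC10, hC1⟩ := h.A1
  refine ⟨C1 * C, by positivity, fun n x hx => ?_⟩
  calc _ ≤ ‖D.W (lam n) x‖ * (C1 * (1 + |lam n|)) := by gcongr; exact hC1 n
    _ = C1 * (‖D.W (lam n) x‖ * (1 + |lam n|)) := by ring
    _ ≤ _ := by gcongr; exact hC _ x hx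

lemma Eig.A3 (h : D.Eig δ lam) : ∃ C : ℝ, 0 < C ∧ ∀ n, |lam n - D.om δ n| * dd n ≤ C := by
  obtain ⟨C, hC0, hC⟩ := h.A2
  have hL := D.Lam_pos
  refine ⟨C / D.Lam, by positivity, fun n => ?_⟩
  have h1 := h.eq n
  have : lam n - D.om δ n = - (D.W (lam n) D.b).im / D.Lam := by
    rw [om, ← h1]; field_simp; ring
  rw [this, abs_div, abs_neg, abs_of_pos hL, div_mul_eq_mul_div]
  gcongr
  refine le_trans ?_ (hC n D.b mem_b)
  gcongr
  · exact (dd_pos n).le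
  · exact Complex.abs_im_le_norm _

lemma Z_E (lam : ℝ) (δ : ℝ) (n : ℤ) (x : ℝ) : D.Z lam x =
    D.E δ n x * cexp (D.W lam x + I * ((lam - D.om δ n : ℝ) * D.ξ x)) := by
  rw [Z, E, ← Complex.exp_add]; congr 1
  simp only [ph, om]; push_cast; ring

lemma Eig.A4 (h : D.Eig δ lam) :
    ∃ C : ℝ, 0 < C ∧ ∀ n, ∀ x ∈ Icc D.a D.b, ‖D.Z (lam n) x - D.E δ n x‖ * dd n ≤ C := by
  obtain ⟨C2, hC20, hC2⟩ := h.A2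
  obtain ⟨C3, hC30, hC3⟩ := h.A3
  obtain ⟨M, hM0, hM⟩ := D.bdd D.cξ
  set K := C2 + C3 * M with hK
  have hK0 : 0 < K := by positivity
  refine ⟨K * Real.exp K, by positivity, fun n x hx => ?_⟩
  rw [Z_E (lam n) δ n x]
  set w := D.W (lam n) x + I * ((lam n - D.om δ n : ℝ) * D.ξ x) with hw
  have hd := dd_pos n
  have hd1 := dd_one n
  have h1 : ‖w‖ * dd n ≤ K := by
    have : ‖w‖ ≤ ‖D.W (lam n) x‖ + |lam n - D.om δ n| * M := by
      refine (norm_add_le _ _).trans ?_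
      rw [norm_mul, Complex.norm_I, one_mul, norm_mul, Complex.norm_real, Complex.norm_real,
        Real.norm_eq_abs]
      gcongr
      exact hM x hx
    calc _ ≤ (‖D.W (lam n) x‖ + |lam n - D.om δ n| * M) * dd n := by gcongr
      _ = ‖D.W (lam n) x‖ * dd n + (|lam n - D.om δ n| * dd n) * M := by ring
      _ ≤ _ := by rw [hK]; gcongr; exacts [hC2 n x hx, hC3 n]
  have h2 : ‖w‖ ≤ K := by nlinarith [norm_nonneg w]
  have h3 := Complex.norm_exp_sub_sum_le_norm_mul_exp w 1
  simp only [Finset.range_one, Finset.sum_singleton, pow_zero, Nat.factorial_zero, Nat.cast_one,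
    div_one, pow_one] at h3
  have h4 : D.E δ n x * cexp w - D.E δ n x = D.E δ n x * (cexp w - 1) := by ring
  rw [h4, norm_mul, E_norm, one_mul]
  calc _ ≤ (‖w‖ * Real.exp ‖w‖) * dd n := by gcongr
    _ = (‖w‖ * dd n) * Real.exp ‖w‖ := by ring
    _ ≤ _ := by gcongr

lemma Eig.A5 (h : D.Eig δ lam) :
    ∃ C : ℝ, 0 < C ∧ ∀ n, ∀ x ∈ Icc D.a D.b, ‖D.Z (lam n) x‖ ≤ C := by
  obtain ⟨C, hC0, hC⟩ := h.A4
  refine ⟨1 + C, by positivity, fun n x hx => ?_⟩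
  have h1 := hC n x hx
  have hd1 := dd_one n
  have h2 : ‖D.Z (lam n) x - D.E δ n x‖ ≤ C := by nlinarith [norm_nonneg (D.Z (lam n) x - D.E δ n x)]
  calc _ = ‖D.E δ n x + (D.Z (lam n) x - D.E δ n x)‖ := by congr 1; ring
    _ ≤ _ := norm_add_le _ _
    _ ≤ _ := by rw [E_norm]; gcongr

variable (D) in
/-- ratio at the right end -/
def rr (lam : ℝ) : ℝ := Real.exp (D.W lam D.b).re

lemma Eig.Zb (h : D.Eig δ lam) (n : ℤ) : D.Z (lam n) D.b = D.rr (lam n) * D.E δ n D.b := by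
  rw [Z_eq, rr, E]; congr 3
  rw [← Phi, h n, ph]
  have := D.Lam_pos.ne'
  rw [← Lam]; norm_cast; field_simp; ring

lemma Eig.A6 (h : D.Eig δ lam) : ∃ C : ℝ, 0 < C ∧ ∀ n, |D.rr (lam n) - 1| * dd n ≤ C := by
  obtain ⟨C, hC0, hC⟩ := h.A4
  refine ⟨C, hC0, fun n => ?_⟩
  have := hC n D.b mem_b
  have e : D.rr (lam n) * D.E δ n D.b - D.E δ n D.b = ((D.rr (lam n) - 1 : ℝ) : ℂ) * D.E δ n D.b := by
    push_cast; ring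
  rwa [h.Zb, e, norm_mul, E_norm, mul_one, Complex.norm_real] at this

variable (D) in
/-- squared norm of `Z` -/
def NN (lam : ℝ) : ℝ := D.ip (D.Z lam) (D.Z lam)

lemma NN_eq (l : ℝ) : D.NN l = ∫ x in D.a..D.b, D.ρ x * ‖D.Z l x‖ ^ 2 := by
  simp only [NN, ip]
  congr 1; ext x; rw [Complex.mul_conj, Complex.normSq_eq_norm_sq]; norm_cast

lemma Eig.A7 (h : D.Eig δ lam) : ∃ C : ℝ, 0 < C ∧ ∀ n, |D.NN (lam n) - D.Lam| * dd n ≤ C := by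
  obtain ⟨C, hC0, hC⟩ := h.A4
  obtain ⟨C5, hC50, hC5⟩ := h.A5
  obtain ⟨M, hM0, hM⟩ := D.bdd D.hρ
  have hab := D.hab
  refine ⟨M * (C * (C5 + 1)) * (D.b - D.a), by
    have : 0 < D.b - D.a := by linarith
    positivity, fun n => ?_⟩
  have cr := D.hρ
  have cz := D.cZ (lam n)
  have e : D.NN (lam n) - D.Lam = ∫ x in D.a..D.b, D.ρ x * (‖D.Z (lam n) x‖ ^ 2 - 1) := by
    rw [NN_eq, Lam, ξ, ← intervalIntegral.integral_sub]
    · congr 1; ext x; ring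
    · exact Continuous.intervalIntegrable (by fun_prop) _ _
    · exact Continuous.intervalIntegrable (by fun_prop) _ _
  have hd := dd_pos n
  have : ‖∫ x in D.a..D.b, D.ρ x * (‖D.Z (lam n) x‖ ^ 2 - 1)‖ ≤
      (M * (C * (C5 + 1)) / dd n) * |D.b - D.a| := by
    apply intervalIntegral.norm_integral_le_of_norm_le_const
    intro x hx
    rw [uIoc_of_le hab.le] at hx
    have hx := Ioc_subset_Icc_self hx
    rw [norm_mul, le_div_iff₀ hd, mul_assoc]
    refine mul_le_mul (hM x hx) ?_ (by positivity) hM0.le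
    have h1 : ‖D.Z (lam n) x‖ ^ 2 - 1 = (‖D.Z (lam n) x‖ - ‖D.E δ n x‖) * (‖D.Z (lam n) x‖ + 1) := by
      rw [E_norm]; ring
    rw [h1, norm_mul, mul_right_comm]
    gcongr
    · refine le_trans ?_ (hC n x hx)
      gcongr
      exact abs_norm_sub_norm_le _ _
    · rw [Real.norm_eq_abs, abs_of_pos (by positivity)]
      linarith [hC5 n x hx]
  rw [← e, abs_of_pos (by linarith), div_mul_eq_mul_div, le_div_iff₀ hd] at this
  exact this

lemma Eig.A8 (h : D.Eig δ lam) : ∃ c : ℝ, 0 < c ∧ ∀ n, c ≤ D.NN (lam n) := by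
  obtain ⟨C, hC0, hC⟩ := h.A2
  have hab := D.hab
  refine ⟨D.Lam * Real.exp (-C) ^ 2, mul_pos D.Lam_pos (by positivity), fun n => ?_⟩
  rw [NN_eq, Lam, ξ, ← intervalIntegral.integral_mul_const]
  have cr := D.hρ
  have cz := D.cZ (lam n)
  apply intervalIntegral.integral_mono_on hab.le
  · exact Continuous.intervalIntegrable (by fun_prop) _ _
  · exact Continuous.intervalIntegrable (by fun_prop) _ _
  intro x hx
  have := D.ρpos x
  gcongr
  rw [Z_eq, norm_mul, mul_comm I, Complex.norm_exp_ofReal_mul_I, mul_one, Complex.norm_real,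
    Real.norm_eq_abs, abs_of_pos (Real.exp_pos _)]
  gcongr
  have h1 := hC n x hx
  have h2 := Complex.abs_re_le_norm (D.W (lam n) x)
  have h3 := neg_abs_le (D.W (lam n) x).re
  nlinarith [dd_one n, norm_nonneg (D.W (lam n) x)]

lemma Eig.NN_pos (h : D.Eig δ lam) (n : ℤ) : 0 < D.NN (lam n) := by
  obtain ⟨c, hc, hn⟩ := h.A8
  linarith [hn n]

lemma Eig.A9 (h : D.Eig δ lam) : ∃ C : ℝ, 0 < C ∧ ∀ n, (D.NN (lam n))⁻¹ ≤ C := by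
  obtain ⟨c, hc, hn⟩ := h.A8
  exact ⟨c⁻¹, by positivity, fun n => by gcongr; exact hn n⟩

lemma Eig.A10 (h : D.Eig δ lam) : ∃ C : ℝ, 0 < C ∧ ∀ n, |(D.NN (lam n))⁻¹ - D.Lam⁻¹| * dd n ≤ C := by
  obtain ⟨C, hC0, hC⟩ := h.A7
  obtain ⟨K, hK0, hK⟩ := h.A9
  have hL := D.Lam_pos
  refine ⟨K * D.Lam⁻¹ * C, by positivity, fun n => ?_⟩
  have hN := h.NN_pos n
  have : (D.NN (lam n))⁻¹ - D.Lam⁻¹ = -((D.NN (lam n))⁻¹ * D.Lam⁻¹ * (D.NN (lam n) - D.Lam)) := by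
    field_simp; ring
  rw [this, abs_neg, abs_mul, abs_of_pos (by positivity), mul_assoc]
  have hd := dd_pos n
  refine mul_le_mul ?_ (hC n) (by positivity) (by positivity)
  gcongr
  exact hK n
end
end DDat

open Set Filter Topology MeasureTheory Complex
open scoped NNReal ComplexConjugate
namespace DDat
noncomputable section
variable {D : DDat} {δ : ℝ} {lam : ℤ → ℝ}

lemma norm_int_le {u : ℝ → ℂ} {K x : ℝ} (hx : x ∈ Icc D.a D.b)
    (hu : ∀ y ∈ Icc D.a D.b, ‖u y‖ ≤ K) : ‖∫ y in D.a..x, u y‖ ≤ K * (D.b - D.a) := by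
  have hK : 0 ≤ K := (norm_nonneg _).trans (hu x hx)
  refine (intervalIntegral.norm_integral_le_of_norm_le_const (C := K) ?_).trans ?_
  · intro y hy
    rw [uIoc_of_le hx.1] at hy
    exact hu y ⟨hy.1.le, hy.2.trans hx.2⟩
  · rw [abs_of_nonneg (by linarith [hx.1])]
    gcongr
    exact hx.2

lemma ibp {F F' U : ℝ → ℂ} (hF : ∀ x, HasDerivAt F (F' x) x) (cF' : Continuous F')
    (cU : Continuous U) {S x : ℝ} (hx : x ∈ Icc D.a D.b)
    (hS : ∀ y ∈ Icc D.a D.b, ‖∫ s in D.a..y, D.ρ s * U s‖ ≤ S) :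
    ‖∫ s in D.a..x, D.ρ s * (F s * U s)‖ ≤ (‖F x‖ + ∫ s in D.a..D.b, ‖F' s‖) * S := by
  have cr := D.hρ
  have hS0 : 0 ≤ S := (norm_nonneg _).trans (hS x hx)
  have cV : Continuous fun s => (D.ρ s : ℂ) * U s := by fun_prop
  have hP : ∀ y, HasDerivAt (fun y => ∫ s in D.a..y, D.ρ s * U s) (D.ρ y * U y) y := fun y =>
    intervalIntegral.integral_hasDerivAt_right (cV.intervalIntegrable _ _)
    (cV.stronglyMeasurableAtFilter _ _) cV.continuousAt
  have cP : Continuous (fun y => ∫ s in D.a..y, D.ρ s * U s) :=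
    continuous_iff_continuousAt.2 fun x => (hP x).continuousAt
  have e : ∫ s in D.a..x, D.ρ s * (F s * U s) = F x * (∫ s in D.a..x, D.ρ s * U s)
      - ∫ y in D.a..x, F' y * (∫ s in D.a..y, D.ρ s * U s) := by
    have := intervalIntegral.integral_mul_deriv_eq_deriv_mul (a := D.a) (b := x)
      (fun y _ => hF y) (fun y _ => hP y) (cF'.intervalIntegrable _ _) (cV.intervalIntegrable _ _)
    simp only [intervalIntegral.integral_same, mul_zero, sub_zero] at this
    rw [← this]; congr 1; ext s; ring
  rw [e]
  refine (norm_sub_le _ _).trans ?_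
  rw [norm_mul, add_mul]
  gcongr
  · exact hS x hx
  calc ‖∫ y in D.a..x, F' y * (∫ s in D.a..y, D.ρ s * U s)‖
      ≤ ∫ y in D.a..x, ‖F' y * (∫ s in D.a..y, D.ρ s * U s)‖ :=
        intervalIntegral.norm_integral_le_integral_norm hx.1
    _ ≤ ∫ y in D.a..x, ‖F' y‖ * S := by
        apply intervalIntegral.integral_mono_on hx.1
        · exact Continuous.intervalIntegrable (by fun_prop) _ _
        · exact Continuous.intervalIntegrable (by fun_prop) _ _
        intro y hy
        rw [norm_mul]; gcongr
        exact hS y ⟨hy.1, hy.2.trans hx.2⟩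
    _ = (∫ y in D.a..x, ‖F' y‖) * S := by rw [intervalIntegral.integral_mul_const]
    _ ≤ _ := by
        gcongr
        apply intervalIntegral.integral_mono_interval le_rfl hx.1 hx.2
        · exact Eventually.of_forall fun y => norm_nonneg _
        · exact cF'.norm.intervalIntegrable _ _

lemma FTZ (l : ℝ) {x : ℝ} (hx : x ∈ Icc D.a D.b) :
    I * l * (∫ s in D.a..x, D.ρ s * D.Z l s) = D.Z l x - D.Z l D.a
      + I * (∫ s in D.a..x, D.m s * D.Z l s) - ∫ s in D.a..x, D.τ s * conj (D.Z l s) := by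
  have cr := D.hρ
  have cm := D.hm
  have ct := D.cτ
  have cz := D.cZ l
  have czc : Continuous fun s => conj (D.Z l s) := Complex.continuous_conj.comp cz
  have h := intervalIntegral.integral_eq_sub_of_hasDerivAt (a := D.a) (b := x) (f := D.Z l)
    (fun y hy => D.hZ l (by rw [uIcc_of_le hx.1] at hy; exact ⟨hy.1, hy.2.trans hx.2⟩))
    (Continuous.intervalIntegrable (by fun_prop) _ _)
  rw [← h, ← intervalIntegral.integral_const_mul, ← intervalIntegral.integral_const_mul,
    ← intervalIntegral.integral_add, ← intervalIntegral.integral_sub]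
  · congr 1; ext s; ring
  all_goals exact Continuous.intervalIntegrable (by fun_prop) _ _

lemma hE (δ : ℝ) (n : ℤ) (x : ℝ) :
    HasDerivAt (D.E δ n) (I * (D.om δ n * D.ρ x - D.m x) * D.E δ n x) x := by
  have := ((D.hph (D.om δ n) x).ofReal_comp.const_mul I).cexp
  refine this.congr_deriv ?_
  rw [E, om]; push_cast; ring

lemma FTE (δ : ℝ) (n : ℤ) (x : ℝ) :
    I * D.om δ n * (∫ s in D.a..x, D.ρ s * D.E δ n s) = D.E δ n x - D.E δ n D.a
      + I * (∫ s in D.a..x, D.m s * D.E δ n s) := by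
  have cr := D.hρ
  have cm := D.hm
  have cz := D.cE δ n
  have h := intervalIntegral.integral_eq_sub_of_hasDerivAt (a := D.a) (b := x) (f := D.E δ n)
    (fun y hy => D.hE δ n y)
    (Continuous.intervalIntegrable (by fun_prop) _ _)
  rw [← h, ← intervalIntegral.integral_const_mul, ← intervalIntegral.integral_const_mul,
    ← intervalIntegral.integral_add]
  · congr 1; ext s; ring
  all_goals exact Continuous.intervalIntegrable (by fun_prop) _ _

lemma Eig.B1 (h : D.Eig δ lam) : ∃ C : ℝ, 0 < C ∧ ∀ n, ∀ x ∈ Icc D.a D.b,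
    ‖∫ s in D.a..x, D.ρ s * D.Z (lam n) s‖ * dd n ≤ C := by
  obtain ⟨C1, hC10, hC1⟩ := h.A1
  obtain ⟨C5, hC50, hC5⟩ := h.A5
  obtain ⟨Mr, hMr0, hMr⟩ := D.bdd D.hρ
  obtain ⟨Mm, hMm0, hMm⟩ := D.bdd D.hm
  obtain ⟨Mt, hMt0, hMt⟩ := D.bdd D.cτ
  have hab : 0 < D.b - D.a := by linarith [D.hab]
  refine ⟨C1 * (Mr * C5 * (D.b - D.a) + (2 * C5 + Mm * C5 * (D.b - D.a) + Mt * C5 * (D.b - D.a))),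
    by positivity, fun n x hx => ?_⟩
  set P := ∫ s in D.a..x, D.ρ s * D.Z (lam n) s with hP
  have h1 : ‖P‖ ≤ Mr * C5 * (D.b - D.a) := by
    apply norm_int_le hx
    intro y hy
    rw [norm_mul, Complex.norm_real]
    exact mul_le_mul (hMr y hy) (hC5 n y hy) (norm_nonneg _) hMr0.le
  have h2 : ‖∫ s in D.a..x, D.m s * D.Z (lam n) s‖ ≤ Mm * C5 * (D.b - D.a) := by
    apply norm_int_le hx
    intro y hy
    rw [norm_mul, Complex.norm_real]
    exact mul_le_mul (hMm y hy) (hC5 n y hy) (norm_nonneg _) hMm0.le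
  have h3 : ‖∫ s in D.a..x, D.τ s * conj (D.Z (lam n) s)‖ ≤ Mt * C5 * (D.b - D.a) := by
    apply norm_int_le hx
    intro y hy
    rw [norm_mul, Complex.norm_conj]
    exact mul_le_mul (hMt y hy) (hC5 n y hy) (norm_nonneg _) hMt0.le
  have h4 : |lam n| * ‖P‖ ≤ 2 * C5 + Mm * C5 * (D.b - D.a) + Mt * C5 * (D.b - D.a) := by
    have : |lam n| * ‖P‖ = ‖I * lam n * P‖ := by
      rw [norm_mul, norm_mul, Complex.norm_I, one_mul, Complex.norm_real, Real.norm_eq_abs]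
    rw [this, hP, FTZ _ hx]
    refine (norm_sub_le _ _).trans (add_le_add ((norm_add_le _ _).trans (add_le_add ?_ ?_)) h3)
    · refine (norm_sub_le _ _).trans ?_
      linarith [hC5 n x hx, hC5 n D.a mem_a]
    · rw [norm_mul, Complex.norm_I, one_mul]; exact h2
  calc ‖P‖ * dd n ≤ ‖P‖ * (C1 * (1 + |lam n|)) := by gcongr; exact hC1 n
    _ = C1 * (‖P‖ + |lam n| * ‖P‖) := by ring
    _ ≤ _ := by gcongr

lemma Eig.B2a (h : D.Eig δ lam) : ∃ C : ℝ, 0 < C ∧ ∀ n, ∀ x ∈ Icc D.a D.b,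
    ‖∫ s in D.a..x, D.τ s * conj (D.Z (lam n) s)‖ * dd n ≤ C := by
  obtain ⟨C, hC0, hC⟩ := h.B1
  obtain ⟨M, hM0, hM⟩ := D.bdd D.cG
  have hi : 0 ≤ ∫ s in D.a..D.b, ‖D.G' s‖ :=
    intervalIntegral.integral_nonneg D.hab.le fun _ _ => norm_nonneg _
  refine ⟨(M + ∫ s in D.a..D.b, ‖D.G' s‖) * C, by positivity, fun n x hx => ?_⟩
  have hd := dd_pos n
  have e : ∫ s in D.a..x, D.τ s * conj (D.Z (lam n) s)
      = conj (∫ s in D.a..x, D.ρ s * (conj (D.G s) * D.Z (lam n) s)) := by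
    rw [intervalIntegral.integral_of_le hx.1, intervalIntegral.integral_of_le hx.1, ← integral_conj]
    congr 1; ext s; simp [τ]; ring
  have hg : ∀ x, HasDerivAt (fun x => conj (D.G x)) (conj (D.G' x)) x := fun x =>
    (D.hG x).star
  have := ibp (D := D) hg (Complex.continuous_conj.comp D.hG') (D.cZ (lam n)) hx
    (S := C / dd n) (fun y hy => by rw [le_div_iff₀ hd]; exact hC n y hy)
  simp only [Complex.norm_conj] at this
  rw [e, Complex.norm_conj, ← le_div_iff₀ hd]
  refine this.trans ?_
  rw [mul_div_assoc]
  gcongr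
  exact hM x hx

lemma Eig.B2 (h : D.Eig δ lam) : ∃ C : ℝ, 0 < C ∧ ∀ n, ∀ x ∈ Icc D.a D.b,
    ‖∫ s in D.a..x, D.ρ s * (D.Z (lam n) s - D.E δ n s)‖ * dd n ^ 2 ≤ C := by
  obtain ⟨C1, hC10, hC1⟩ := h.A1
  obtain ⟨C3, hC30, hC3⟩ := h.A3
  obtain ⟨C4, hC40, hC4⟩ := h.A4
  obtain ⟨C6, hC60, hC6⟩ := h.B2a
  obtain ⟨Mr, hMr0, hMr⟩ := D.bdd D.hρ
  obtain ⟨Mm, hMm0, hMm⟩ := D.bdd D.hm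
  have hab : 0 < D.b - D.a := by linarith [D.hab]
  refine ⟨C1 * (Mr * C4 * (D.b - D.a) + (C4 + C4 + Mm * C4 * (D.b - D.a) + C6
    + C3 * (Mr * (D.b - D.a)))), by positivity, fun n x hx => ?_⟩
  have hd := dd_pos n
  have cr := D.hρ
  have cm := D.hm
  have cz := D.cZ (lam n)
  have ce := D.cE δ n
  set Q := ∫ s in D.a..x, D.ρ s * (D.Z (lam n) s - D.E δ n s) with hQ
  have hA4 : ∀ y ∈ Icc D.a D.b, ‖D.Z (lam n) y - D.E δ n y‖ ≤ C4 / dd n := fun y hy => by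
    rw [le_div_iff₀ hd]; exact hC4 n y hy
  have h1 : ‖Q‖ ≤ (Mr * C4 * (D.b - D.a)) / dd n := by
    have : ‖Q‖ ≤ (Mr * (C4 / dd n)) * (D.b - D.a) := by
      apply norm_int_le hx
      intro y hy
      rw [norm_mul, Complex.norm_real]
      exact mul_le_mul (hMr y hy) (hA4 y hy) (norm_nonneg _) hMr0.le
    refine this.trans_eq (by ring)
  have h2 : ‖∫ s in D.a..x, D.m s * (D.Z (lam n) s - D.E δ n s)‖ ≤ (Mm * (C4 / dd n)) * (D.b - D.a) := by
    apply norm_int_le hx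
    intro y hy
    rw [norm_mul, Complex.norm_real]
    exact mul_le_mul (hMm y hy) (hA4 y hy) (norm_nonneg _) hMm0.le
  have h3 : ‖∫ s in D.a..x, D.ρ s * D.E δ n s‖ ≤ Mr * (D.b - D.a) := by
    apply norm_int_le hx
    intro y hy
    rw [norm_mul, Complex.norm_real, E_norm, mul_one]
    exact hMr y hy
  have eQ : Q = (∫ s in D.a..x, D.ρ s * D.Z (lam n) s) - ∫ s in D.a..x, D.ρ s * D.E δ n s := by
    rw [hQ, ← intervalIntegral.integral_sub]
    · congr 1; ext s; ring
    all_goals exact Continuous.intervalIntegrable (by fun_prop) _ _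
  have em : (∫ s in D.a..x, D.m s * (D.Z (lam n) s - D.E δ n s))
      = (∫ s in D.a..x, D.m s * D.Z (lam n) s) - ∫ s in D.a..x, D.m s * D.E δ n s := by
    rw [← intervalIntegral.integral_sub]
    · congr 1; ext s; ring
    all_goals exact Continuous.intervalIntegrable (by fun_prop) _ _
  have e : I * lam n * Q = (D.Z (lam n) x - D.E δ n x) - (D.Z (lam n) D.a - D.E δ n D.a)
      + I * (∫ s in D.a..x, D.m s * (D.Z (lam n) s - D.E δ n s))
      - (∫ s in D.a..x, D.τ s * conj (D.Z (lam n) s))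
      - I * ((lam n - D.om δ n : ℝ) : ℂ) * (∫ s in D.a..x, D.ρ s * D.E δ n s) := by
    rw [eQ, em]
    push_cast
    linear_combination FTZ (lam n) hx - FTE (D := D) δ n x
  have h4 : |lam n| * ‖Q‖ ≤ (C4 + C4 + Mm * C4 * (D.b - D.a) + C6 + C3 * (Mr * (D.b - D.a))) / dd n := by
    have : |lam n| * ‖Q‖ = ‖I * lam n * Q‖ := by
      rw [norm_mul, norm_mul, Complex.norm_I, one_mul, Complex.norm_real, Real.norm_eq_abs]
    rw [this, e]
    have h6 := hC6 n x hx
    rw [← le_div_iff₀ hd] at h6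
    have h7 := hC3 n
    rw [← le_div_iff₀ hd] at h7
    rw [add_div, add_div, add_div, add_div]
    refine (norm_sub_le _ _).trans (add_le_add ((norm_sub_le _ _).trans (add_le_add
      ((norm_add_le _ _).trans (add_le_add ((norm_sub_le _ _).trans
        (add_le_add (hA4 x hx) (hA4 _ mem_a))) ?_)) h6)) ?_)
    · rw [norm_mul, Complex.norm_I, one_mul]; refine h2.trans_eq (by ring)
    · rw [norm_mul, norm_mul, Complex.norm_I, one_mul, Complex.norm_real, Real.norm_eq_abs]
      rw [mul_div_right_comm]
      exact mul_le_mul h7 h3 (norm_nonneg _) (by positivity)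
  calc ‖Q‖ * dd n ^ 2 = ‖Q‖ * dd n * dd n := by ring
    _ ≤ ‖Q‖ * (C1 * (1 + |lam n|)) * dd n := by gcongr; exact hC1 n
    _ = C1 * (‖Q‖ + |lam n| * ‖Q‖) * dd n := by ring
    _ ≤ C1 * ((Mr * C4 * (D.b - D.a)) / dd n + (C4 + C4 + Mm * C4 * (D.b - D.a) + C6 + C3 * (Mr * (D.b - D.a))) / dd n) * dd n := by
        gcongr
    _ = _ := by field_simp

lemma ip_re {F u : ℝ → ℂ} (cF : Continuous F) (cu : Continuous u) :
    D.ip u F = (∫ s in D.a..D.b, D.ρ s * (conj (F s) * u s)).re := by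
  have cr := D.hρ
  have c1 : Continuous fun s => conj (F s) := Complex.continuous_conj.comp cF
  rw [ip, ← Complex.reCLM_apply, ← ContinuousLinearMap.intervalIntegral_comp_comm]
  · congr 1; ext s; simp
  · exact Continuous.intervalIntegrable (by fun_prop) _ _

variable (D) in
def MM (F F' : ℝ → ℂ) : ℝ := ‖F D.b‖ + ∫ s in D.a..D.b, ‖F' s‖
lemma MM_nonneg (F F' : ℝ → ℂ) : 0 ≤ D.MM F F' :=
  add_nonneg (norm_nonneg _) (intervalIntegral.integral_nonneg D.hab.le fun _ _ => norm_nonneg _)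

lemma ip_le {F F' U : ℝ → ℂ} (hF : ∀ x, HasDerivAt F (F' x) x) (cF' : Continuous F')
    (cU : Continuous U) {S : ℝ} 
    (hS : ∀ y ∈ Icc D.a D.b, ‖∫ s in D.a..y, D.ρ s * U s‖ ≤ S) :
    |D.ip U F| ≤ D.MM F F' * S := by
  have cF : Continuous F := continuous_iff_continuousAt.2 fun x => (hF x).continuousAt
  rw [ip_re cF cU]
  refine (Complex.abs_re_le_norm _).trans ?_
  have hg : ∀ x, HasDerivAt (fun x => conj (F x)) (conj (F' x)) x := fun x => (hF x).star
  have := ibp (D := D) hg (Complex.continuous_conj.comp cF') cU mem_b hS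
  simpa only [Complex.norm_conj, MM] using this

lemma vec_sub {u v : ℝ → ℂ} (cu : Continuous u) (cv : Continuous v)
    (h : Continuous fun x => u x - v x) :
    D.vec (fun x => u x - v x) h = D.vec u cu - D.vec v cv := by
  unfold vec
  rw [← MemLp.toLp_sub]
  congr 1
  ext x; simp [wt]; ring

lemma vec_smul {u : ℝ → ℂ} (cu : Continuous u) (c : ℝ) (h : Continuous fun x => (c : ℂ) * u x) :
    D.vec (fun x => (c : ℂ) * u x) h = c • D.vec u cu := by
  unfold vec
  rw [← MemLp.toLp_const_smul]
  congr 1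
  ext x; simp [wt]; ring

lemma ip_sub_left {F u v : ℝ → ℂ} (cF : Continuous F) (cu : Continuous u) (cv : Continuous v) :
    D.ip (fun x => u x - v x) F = D.ip u F - D.ip v F := by
  have h : Continuous fun x => u x - v x := by fun_prop
  rw [← D.inner_vecC h cF, ← D.inner_vecC cu cF, ← D.inner_vecC cv cF, ← inner_sub_left,
    vec_sub cu cv]

lemma Eig.B3 (h : D.Eig δ lam) : ∃ C : ℝ, 0 < C ∧ ∀ n, ∀ F F' : ℝ → ℂ, 
    (∀ x, HasDerivAt F (F' x) x) → Continuous F' →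
    |D.ip (D.Z (lam n)) F| * dd n ≤ C * D.MM F F' ∧
    |D.ip (D.Z (lam n)) F - D.ip (D.E δ n) F| * dd n ^ 2 ≤ C * D.MM F F' := by
  obtain ⟨C1, hC10, hC1⟩ := h.B1
  obtain ⟨C2, hC20, hC2⟩ := h.B2
  refine ⟨C1 + C2, by positivity, fun n F F' hF cF' => ?_⟩
  have hd := dd_pos n
  have cF : Continuous F := continuous_iff_continuousAt.2 fun x => (hF x).continuousAt
  have hM := MM_nonneg (D := D) F F'
  constructor
  · have := ip_le (D := D) hF cF' (D.cZ (lam n)) (S := C1 / dd n) fun y hy => by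
      rw [le_div_iff₀ hd]; exact hC1 n y hy
    rw [← mul_div_assoc, le_div_iff₀ hd] at this
    nlinarith
  · rw [← ip_sub_left cF (D.cZ (lam n)) (D.cE δ n)]
    have := ip_le (D := D) hF cF' ((D.cZ (lam n)).sub (D.cE δ n)) (S := C2 / dd n ^ 2) fun y hy => by
      rw [le_div_iff₀ (by positivity)]; exact hC2 n y hy
    rw [← mul_div_assoc, le_div_iff₀ (by positivity)] at this
    have e : |D.ip (fun x => D.Z (lam n) x - D.E δ n x) F| * dd n ^ 2 ≤ D.MM F F' * C2 := this
    nlinarith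
end
end DDat

open Set Filter Topology MeasureTheory Complex
open scoped NNReal ComplexConjugate
namespace DDat
noncomputable section
variable {D : DDat} {δ : ℝ} {lam : ℤ → ℝ}

lemma green (l : ℝ) {U U' : ℝ → ℂ} (hU : ∀ x ∈ Icc D.a D.b, HasDerivAt U (U' x) x)
    (cU' : Continuous U') (cU : Continuous U) :
    l * D.ip (D.Z l) U = (∫ x in D.a..D.b,
      ((U' x - D.τ x * conj (U x) + I * D.m x * U x) * conj (D.Z l x)).im)
      - (U D.b * conj (D.Z l D.b)).im + (U D.a * conj (D.Z l D.a)).im := by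
  have cr := D.hρ
  have cm := D.hm
  have ct := D.cτ
  have cz := D.cZ l
  have czc : Continuous fun s => conj (D.Z l s) := Complex.continuous_conj.comp cz
  have cuc : Continuous fun s => conj (U s) := Complex.continuous_conj.comp cU
  have c1 : Continuous fun x => (U' x - D.τ x * conj (U x) + I * D.m x * U x) * conj (D.Z l x) := by
    fun_prop
  have c2 : Continuous fun x => ((U' x - D.τ x * conj (U x) + I * D.m x * U x) * conj (D.Z l x)).im :=
    Complex.continuous_im.comp c1
  have c3 : Continuous fun x => l * (D.ρ x * (U x * conj (D.Z l x)).re) := by fun_prop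
  have h : ∀ x ∈ Icc D.a D.b, HasDerivAt (fun x => (U x * conj (D.Z l x)).im)
      (((U' x - D.τ x * conj (U x) + I * D.m x * U x) * conj (D.Z l x)).im
        - l * (D.ρ x * (U x * conj (D.Z l x)).re)) x := by
    intro x hx
    have h1 := (hU x hx).mul (D.hZ l hx).star
    have h2 := (Complex.imCLM.hasFDerivAt (x := U x * conj (D.Z l x))).comp_hasDerivAt x h1
    refine h2.congr_deriv ?_
    simp only [Complex.imCLM_apply]
    change (U' x * conj (D.Z l x) + U x * conj _).im = _
    simp [Complex.mul_re, Complex.mul_im]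
    ring
  have h3 := intervalIntegral.integral_eq_sub_of_hasDerivAt (a := D.a) (b := D.b)
    (fun y hy => h y (by rwa [uIcc_of_le D.hab.le] at hy))
    ((c2.sub c3).intervalIntegrable _ _)
  rw [intervalIntegral.integral_sub (c2.intervalIntegrable _ _) (c3.intervalIntegrable _ _),
    intervalIntegral.integral_const_mul] at h3
  rw [ip]; linarith

lemma Eb (δ : ℝ) (n : ℤ) : D.E δ n D.b = (-1) ^ n * D.E δ 0 D.b := by
  rw [E_eq, Xb, ← Complex.exp_pi_mul_I, ← Complex.exp_int_mul]
  congr 2; push_cast; ring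

lemma Eig.inj (h : D.Eig δ lam) {n k : ℤ} (hnk : n ≠ k) : lam n ≠ lam k := by
  intro e
  have h1 := h n
  rw [e, h k] at h1
  have : ((k : ℝ) - n) * Real.pi = 0 := by linarith
  have := (mul_eq_zero.1 this).resolve_right Real.pi_ne_zero
  exact hnk (by exact_mod_cast (sub_eq_zero.1 this).symm)

lemma Eig.ortho (h : D.Eig δ lam) {n k : ℤ} (hnk : n ≠ k) :
    D.ip (D.Z (lam n)) (D.Z (lam k)) = 0 := by
  have cr := D.hρ
  have cm := D.hm
  have ct := D.cτ
  have cz := D.cZ (lam k)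
  have czc : Continuous fun s => conj (D.Z (lam k) s) := Complex.continuous_conj.comp cz
  have g := green (D := D) (lam n) (fun x hx => D.hZ (lam k) hx) (by fun_prop) cz
  have e1 : (D.Z (lam k) D.b * conj (D.Z (lam n) D.b)).im = 0 := by
    rw [h.Zb, h.Zb, Eb, Eb δ n, map_mul, map_mul, Complex.conj_ofReal]
    have : D.rr (lam k) * ((-1) ^ k * D.E δ 0 D.b) *
      (D.rr (lam n) * (conj ((-1 : ℂ) ^ n) * conj (D.E δ 0 D.b)))
      = ((D.rr (lam k) * D.rr (lam n) * (-1 : ℝ) ^ k * (-1 : ℝ) ^ n : ℝ) : ℂ) * (D.E δ 0 D.b * conj (D.E δ 0 D.b)) := by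
      rw [map_zpow₀]; push_cast; simp; ring
    rw [this, Complex.mul_conj, ← Complex.ofReal_mul, Complex.ofReal_im]
  have e2 : (D.Z (lam k) D.a * conj (D.Z (lam n) D.a)).im = 0 := by
    rw [Za, Za, Complex.mul_conj, Complex.ofReal_im]
  have e3 : (∫ x in D.a..D.b, ((I * (lam k * D.ρ x - D.m x) * D.Z (lam k) x
      + D.τ x * conj (D.Z (lam k) x) - D.τ x * conj (D.Z (lam k) x) + I * D.m x * D.Z (lam k) x)
        * conj (D.Z (lam n) x)).im) = lam k * D.ip (D.Z (lam n)) (D.Z (lam k)) := by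
    rw [ip, ← intervalIntegral.integral_const_mul]
    congr 1; ext x
    have : (I * (lam k * D.ρ x - D.m x) * D.Z (lam k) x
      + D.τ x * conj (D.Z (lam k) x) - D.τ x * conj (D.Z (lam k) x) + I * D.m x * D.Z (lam k) x)
        * conj (D.Z (lam n) x) = ((lam k * D.ρ x : ℝ) : ℂ) * (I * (D.Z (lam k) x * conj (D.Z (lam n) x))) := by
      push_cast; ring
    rw [this, Complex.im_ofReal_mul, Complex.I_mul_im]; ring
  rw [e1, e2, e3] at g
  have := h.inj hnk
  have : (lam n - lam k) * D.ip (D.Z (lam n)) (D.Z (lam k)) = 0 := by linarith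
  exact (mul_eq_zero.1 this).resolve_left (sub_ne_zero.2 (h.inj hnk))

lemma summable_dd : Summable fun n : ℤ => 1 / dd n ^ 2 := by
  have h := (Real.summable_one_div_int_pow (p := 2)).2 (by norm_num)
  refine Summable.of_norm_bounded_eventually h ?_
  have : ∀ᶠ n : ℤ in cofinite, n ≠ 0 := by
    simpa using (finite_singleton (0 : ℤ)).eventually_cofinite_notMem
  filter_upwards [this] with n hn
  have hd := dd_pos n
  rw [Real.norm_eq_abs, abs_of_pos (by positivity)]
  have hn' : 0 < |(n : ℝ)| := abs_pos.2 (by exact_mod_cast hn)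
  rw [← sq_abs (n : ℝ)]
  gcongr
  unfold dd; linarith

lemma norm_vec_sq {u : ℝ → ℂ} (cu : Continuous u) : ‖D.vec u cu‖ ^ 2 = D.ip u u := by
  rw [← real_inner_self_eq_norm_sq, inner_vecC]

lemma ip_self (u : ℝ → ℂ) : D.ip u u = ∫ x in D.a..D.b, D.ρ x * ‖u x‖ ^ 2 := by
  simp only [ip]
  congr 1; ext x; rw [Complex.mul_conj, Complex.normSq_eq_norm_sq]; norm_cast

lemma norm_vec_le {u : ℝ → ℂ} (cu : Continuous u) {K : ℝ} 
    (hu : ∀ x ∈ Icc D.a D.b, ‖u x‖ ≤ K) : ‖D.vec u cu‖ ≤ K * Real.sqrt D.Lam := by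
  have hK : 0 ≤ K := (norm_nonneg _).trans (hu D.b mem_b)
  have hL := D.Lam_pos
  have cr := D.hρ
  apply le_of_sq_le_sq _ (by positivity)
  rw [norm_vec_sq, ip_self, mul_pow, Real.sq_sqrt hL.le, Lam, ξ,
    ← intervalIntegral.integral_const_mul]
  apply intervalIntegral.integral_mono_on D.hab.le
  · exact Continuous.intervalIntegrable (by fun_prop) _ _
  · exact Continuous.intervalIntegrable (by fun_prop) _ _
  intro x hx
  have := D.ρpos x
  rw [mul_comm]
  gcongr
  exact hu x hx

variable (D) in
def yy (l : ℝ) : D.H := (Real.sqrt (D.NN l))⁻¹ • D.vec (D.Z l) (D.cZ l)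

lemma Eig.yy_orth (h : D.Eig δ lam) : Orthonormal ℝ (fun n => D.yy (lam n)) := by
  rw [orthonormal_iff_ite]
  intro n k
  have hL := h.NN_pos n
  have h1 : Real.sqrt (D.NN (lam n)) * Real.sqrt (D.NN (lam n)) = D.NN (lam n) := Real.mul_self_sqrt hL.le
  have h2 : 0 < Real.sqrt (D.NN (lam n)) := Real.sqrt_pos.2 hL
  rw [yy, yy, real_inner_smul_left, real_inner_smul_right, inner_vecC]
  split_ifs with hnk
  · subst hnk
    rw [← NN]; field_simp; nlinarith
  · rw [h.ortho hnk]; simp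

lemma Eig.yy_close (h : D.Eig δ lam) : Summable fun n => ‖D.yy (lam n) - D.nE δ n‖ ^ 2 := by
  obtain ⟨C4, hC40, hC4⟩ := h.A4
  obtain ⟨C7, hC70, hC7⟩ := h.A7
  have hL := D.Lam_pos
  have hsL := Real.sqrt_pos.2 hL
  refine Summable.of_nonneg_of_le (fun n => by positivity) (fun n => ?_)
    (summable_dd.mul_left ((C7 / D.Lam + C4) ^ 2))
  have hd := dd_pos n
  have hN := h.NN_pos n
  have hsN := Real.sqrt_pos.2 hN
  rw [mul_one_div, ← div_pow]
  gcongr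
  have ce : Continuous fun x => D.Z (lam n) x - D.E δ n x := (D.cZ (lam n)).sub (D.cE δ n)
  have e : D.yy (lam n) - D.nE δ n = ((Real.sqrt (D.NN (lam n)))⁻¹ - (Real.sqrt D.Lam)⁻¹) • D.vec (D.Z (lam n)) (D.cZ (lam n))
      + (Real.sqrt D.Lam)⁻¹ • D.vec _ ce := by
    rw [vec_sub (D.cZ (lam n)) (D.cE δ n), yy, nE, sub_smul, smul_sub]; abel
  have h1 : ‖D.vec _ ce‖ ≤ C4 / dd n * Real.sqrt D.Lam := norm_vec_le ce fun x hx => by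
    rw [le_div_iff₀ hd]; exact hC4 n x hx
  have h2 : ‖D.vec (D.Z (lam n)) (D.cZ (lam n))‖ = Real.sqrt (D.NN (lam n)) := by
    rw [NN, ← norm_vec_sq (D.cZ (lam n)), Real.sqrt_sq (norm_nonneg _)]
  rw [e, add_div]
  refine (norm_add_le _ _).trans (add_le_add ?_ ?_)
  · rw [norm_smul, h2, Real.norm_eq_abs]
    have h7 := hC7 n
    have s1 := Real.sq_sqrt hL.le
    have s2 := Real.sq_sqrt hN.le
    have e1 : |(Real.sqrt (D.NN (lam n)))⁻¹ - (Real.sqrt D.Lam)⁻¹| * Real.sqrt (D.NN (lam n))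
        = |D.NN (lam n) - D.Lam| / (Real.sqrt D.Lam * (Real.sqrt (D.NN (lam n)) + Real.sqrt D.Lam)) := by
      rw [← abs_of_pos hsN, ← abs_mul, abs_of_pos hsN]
      rw [eq_div_iff (by positivity), ← abs_of_pos (a := Real.sqrt D.Lam * (Real.sqrt (D.NN (lam n)) + Real.sqrt D.Lam)) (by positivity),
        ← abs_mul, ← abs_neg]
      congr 1
      field_simp
      nlinarith
    rw [e1, div_right_comm]
    rw [← le_div_iff₀ hd] at h7
    gcongr
    nlinarith
  · rw [norm_smul, norm_inv, Real.norm_eq_abs, abs_of_pos hsL]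
    calc _ ≤ (Real.sqrt D.Lam)⁻¹ * (C4 / dd n * Real.sqrt D.Lam) := by gcongr
      _ = _ := by field_simp

lemma Eig.complete (h : D.Eig δ lam) {U : ℝ → ℂ} (cU : Continuous U)
    (hU : ∀ n, D.ip (D.Z (lam n)) U = 0) : ∀ x ∈ Icc D.a D.b, U x = 0 := by
  have hv : D.vec U cU = 0 := by
    refine bari (D.basisE δ) (fun n => D.yy (lam n)) h.yy_orth ?_ _ ?_
    · rw [basisE_coe]; exact h.yy_close
    · intro n
      rw [yy, real_inner_smul_left, inner_vecC, hU, mul_zero]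
  have h1 : D.ip U U = 0 := by rw [← norm_vec_sq cU, hv]; simp
  intro x hx
  by_contra hne
  have cr := D.hρ
  have := intervalIntegral.integral_pos (f := fun x => D.ρ x * ‖U x‖ ^ 2) D.hab
    (by fun_prop) (fun y _ => by have := D.ρpos y; positivity)
    ⟨x, hx, by have := D.ρpos x; have := norm_pos_iff.2 hne; positivity⟩
  rw [← ip_self, h1] at this
  exact lt_irrefl _ this

lemma Eig.bessel (h : D.Eig δ lam) {U : ℝ → ℂ} (cU : Continuous U) :
    Summable fun n => D.ip (D.Z (lam n)) U ^ 2 := by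
  have h0 := h.yy_orth.inner_products_summable (x := D.vec U cU)
  obtain ⟨C7, hC70, hC7⟩ := h.A7
  refine Summable.of_nonneg_of_le (fun n => by positivity) (fun n => ?_) (h0.mul_left (D.Lam + C7))
  have hN := h.NN_pos n
  have hsN := Real.sqrt_pos.2 hN
  have hd := dd_one n
  have h7 : D.NN (lam n) ≤ D.Lam + C7 := by
    have := hC7 n
    have := le_abs_self (D.NN (lam n) - D.Lam)
    nlinarith [abs_nonneg (D.NN (lam n) - D.Lam)]
  rw [yy, real_inner_smul_left, inner_vecC, Real.norm_eq_abs, sq_abs, mul_pow, inv_pow, Real.sq_sqrt hN.le]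
  rw [← mul_assoc]
  have : 1 ≤ (D.Lam + C7) * (D.NN (lam n))⁻¹ := by
    rw [← div_eq_mul_inv, le_div_iff₀ hN]; linarith
  nlinarith [sq_nonneg (D.ip (D.Z (lam n)) U)]
end
end DDat

open Set Filter Topology MeasureTheory Complex
open scoped NNReal ComplexConjugate
namespace DDat
noncomputable section
variable {D : DDat} {δ : ℝ} {lam : ℤ → ℝ}

lemma Eig.summ (h : D.Eig δ lam) {F F' : ℝ → ℂ} (hF : ∀ x, HasDerivAt F (F' x) x)
    (cF' : Continuous F') (ha : F D.a = 0) (hb : F D.b = 0) :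
    Summable fun n => |(D.NN (lam n))⁻¹ * D.ip (D.Z (lam n)) F| := by
  have cF : Continuous F := continuous_iff_continuousAt.2 fun x => (hF x).continuousAt
  have cr := D.hρ
  have cm := D.hm
  have ct := D.cτ
  have cuc : Continuous fun s => conj (F s) := Complex.continuous_conj.comp cF
  let G : ℝ → ℂ := fun x => -I * (F' x - D.τ x * conj (F x) + I * D.m x * F x) / D.ρ x
  have cG : Continuous G := by
    have c1 : Continuous fun x => -I * (F' x - D.τ x * conj (F x) + I * D.m x * F x) := by fun_prop
    have c2 : Continuous fun x => (D.ρ x : ℂ) := by fun_prop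
    exact c1.div c2 fun x => by exact_mod_cast (D.ρpos x).ne'
  have key : ∀ n, lam n * D.ip (D.Z (lam n)) F = D.ip (D.Z (lam n)) G := by
    intro n
    rw [green (lam n) (fun x _ => hF x) cF' cF, ha, hb]
    simp only [zero_mul, Complex.zero_im, sub_zero, add_zero]
    rw [ip]
    congr 1; ext x
    have hr : (D.ρ x : ℂ) ≠ 0 := by exact_mod_cast (D.ρpos x).ne'
    rw [← Complex.re_ofReal_mul]
    have : (D.ρ x : ℂ) * (G x * conj (D.Z (lam n) x))
        = -I * ((F' x - D.τ x * conj (F x) + I * D.m x * F x) * conj (D.Z (lam n) x)) := by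
      simp only [G]; field_simp
    rw [this, neg_mul, Complex.neg_re, Complex.I_mul_re, neg_neg]
  obtain ⟨C1, hC10, hC1⟩ := h.A1
  obtain ⟨C9, hC90, hC9⟩ := h.A9
  have s1 := h.bessel cF
  have s2 := h.bessel cG
  refine Summable.of_nonneg_of_le (fun n => abs_nonneg _) (fun n => ?_)
    ((((s1.add s2).mul_left 2).add (summable_dd.mul_left (C1 ^ 2))).mul_left C9)
  have hd := dd_pos n
  have hN := h.NN_pos n
  set x := |D.ip (D.Z (lam n)) F| with hx
  set y := |D.ip (D.Z (lam n)) G| with hy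
  have h1 : |lam n| * x = y := by rw [hx, hy, ← key n, abs_mul]
  have h2 : x * dd n ≤ C1 * (x + y) := by
    calc x * dd n ≤ x * (C1 * (1 + |lam n|)) := by gcongr; exact hC1 n
      _ = _ := by rw [← h1]; ring
  have hx0 : 0 ≤ x := abs_nonneg _
  have hy0 : 0 ≤ y := abs_nonneg _
  rw [abs_mul, abs_of_pos (inv_pos.2 hN), ← sq_abs (D.ip _ F), ← sq_abs (D.ip _ G), ← hx, ← hy]
  refine mul_le_mul (hC9 n) ?_ hx0 hC90.le
  rw [mul_one_div, ← div_pow]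
  rw [← le_div_iff₀ hd] at h2
  have h3 : C1 * (x + y) / dd n = (C1 / dd n) * (x + y) := by ring
  rw [h3] at h2
  nlinarith [sq_nonneg (C1 / dd n - (x + y)), sq_nonneg (x - y)]

lemma ip_sub_right {F u v : ℝ → ℂ} (cF : Continuous F) (cu : Continuous u) (cv : Continuous v) :
    D.ip F (fun x => u x - v x) = D.ip F u - D.ip F v := by
  have h : Continuous fun x => u x - v x := by fun_prop
  rw [← D.inner_vecC cF h, ← D.inner_vecC cF cu, ← D.inner_vecC cF cv, ← inner_sub_right,
    vec_sub cu cv]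

lemma Eig.expand0 (h : D.Eig δ lam) {F F' : ℝ → ℂ} (hF : ∀ x, HasDerivAt F (F' x) x)
    (cF' : Continuous F') (ha : F D.a = 0) (hb : F D.b = 0) :
    HasSum (fun n => (((D.NN (lam n))⁻¹ * D.ip (D.Z (lam n)) F : ℝ) : ℂ) * D.Z (lam n) D.b) 0 := by
  have cF : Continuous F := continuous_iff_continuousAt.2 fun x => (hF x).continuousAt
  have hs := h.summ hF cF' ha hb
  obtain ⟨C5, hC50, hC5⟩ := h.A5
  obtain ⟨Mr, hMr0, hMr⟩ := D.bdd D.hρ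
  set A : ℤ → ℝ := fun n => (D.NN (lam n))⁻¹ * D.ip (D.Z (lam n)) F with hA
  have hs : Summable fun n => |A n| := hs
  let pr : ℝ → ℝ := fun x => (projIcc D.a D.b D.hab.le x : ℝ)
  have cpr : Continuous pr := continuous_subtype_val.comp continuous_projIcc
  have pr_mem : ∀ x, pr x ∈ Icc D.a D.b := fun x => (projIcc D.a D.b D.hab.le x).2
  have pr_eq : ∀ x ∈ Icc D.a D.b, pr x = x := fun x hx => by simp [pr, projIcc_of_mem _ hx]
  have hbd : ∀ n x, ‖(A n : ℂ) * D.Z (lam n) (pr x)‖ ≤ |A n| * C5 := by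
    intro n x
    rw [norm_mul, Complex.norm_real, Real.norm_eq_abs]
    gcongr
    exact hC5 n _ (pr_mem x)
  have hs5 : Summable fun n => |A n| * C5 := hs.mul_right _
  let hh : ℝ → ℂ := fun x => ∑' n, (A n : ℂ) * D.Z (lam n) (pr x)
  have chh : Continuous hh := by
    refine continuous_tsum (fun n => ?_) hs5 hbd
    exact continuous_const.mul ((D.cZ (lam n)).comp cpr)
  have hsum : ∀ x, HasSum (fun n => (A n : ℂ) * D.Z (lam n) (pr x)) (hh x) := fun x =>
    (Summable.of_norm_bounded hs5 (fun n => hbd n x)).hasSum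
  have hip : ∀ k, D.ip (D.Z (lam k)) hh = D.ip (D.Z (lam k)) F := by
    intro k
    have hk : HasSum (fun n => ∫ x in D.a..D.b, D.ρ x * ((A n : ℂ) * D.Z (lam n) (pr x) * conj (D.Z (lam k) x)).re)
        (D.ip (D.Z (lam k)) hh) := by
      unfold ip
      apply intervalIntegral.hasSum_integral_of_dominated_convergence
        (bound := fun n _ => Mr * ((|A n| * C5) * C5))
      · intro n
        have c1 := D.hρ
        have c2 := (D.cZ (lam n)).comp cpr
        have c3 : Continuous fun s => conj (D.Z (lam k) s) := Complex.continuous_conj.comp (D.cZ (lam k))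
        refine Continuous.aestronglyMeasurable ?_
        exact c1.mul (Complex.continuous_re.comp ((continuous_const.mul c2).mul c3))
      · intro n
        refine Eventually.of_forall fun x hx => ?_
        rw [uIoc_of_le D.hab.le] at hx
        have hx := Ioc_subset_Icc_self hx
        rw [norm_mul]
        refine mul_le_mul (hMr x hx) ?_ (norm_nonneg _) hMr0.le
        refine (Complex.abs_re_le_norm _).trans ?_
        rw [norm_mul, Complex.norm_conj]
        exact mul_le_mul (hbd n x) (hC5 k x hx) (norm_nonneg _) (by positivity)
      · exact Eventually.of_forall fun x hx => (hs5.mul_right _).mul_left _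
      · exact intervalIntegrable_const
      · refine Eventually.of_forall fun x hx => ?_
        have := ((hsum x).mul_right (conj (D.Z (lam k) x))).mapL Complex.reCLM
        exact this.mul_left _
    have hv : ∀ n, (∫ x in D.a..D.b, D.ρ x * ((A n : ℂ) * D.Z (lam n) (pr x) * conj (D.Z (lam k) x)).re)
        = if n = k then D.ip (D.Z (lam k)) F else 0 := by
      intro n
      have e : (∫ x in D.a..D.b, D.ρ x * ((A n : ℂ) * D.Z (lam n) (pr x) * conj (D.Z (lam k) x)).re)
          = A n * D.ip (D.Z (lam k)) (D.Z (lam n)) := by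
        rw [ip, ← intervalIntegral.integral_const_mul]
        apply intervalIntegral.integral_congr
        intro x hx
        rw [uIcc_of_le D.hab.le] at hx
        simp only [pr_eq x hx, mul_assoc, Complex.re_ofReal_mul]
        ring
      rw [e]
      split_ifs with hnk
      · subst hnk
        have := (h.NN_pos n).ne'
        rw [← NN]; simp only [hA]; field_simp
      · rw [h.ortho (Ne.symm hnk), mul_zero]
    simp only [hv] at hk
    exact hk.unique (hasSum_ite_eq k _)
  have hz := h.complete (cF.sub chh) (fun n => by
    change D.ip (D.Z (lam n)) (fun x => F x - hh x) = 0
    rw [ip_sub_right (D.cZ _) cF chh, hip, sub_self]) D.b mem_b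
  have hz' : hh D.b = 0 := by
    have : F D.b - hh D.b = 0 := hz
    rw [hb] at this; simpa using this
  have := hsum D.b
  rw [hz', pr_eq _ mem_b] at this
  exact this
end
end DDat

open Set Filter Topology MeasureTheory Complex
open scoped NNReal ComplexConjugate
namespace DDat
noncomputable section
variable {D : DDat} {δ : ℝ} {lam : ℤ → ℝ}

lemma sumIcc_succ {M : Type*} [AddCommMonoid M] (f : ℤ → M) (N : ℕ) :
    ∑ n ∈ Finset.Icc (-((N + 1 : ℕ) : ℤ)) ((N + 1 : ℕ) : ℤ), f n
      = (∑ n ∈ Finset.Icc (-(N : ℤ)) (N : ℤ), f n) + f (N + 1) + f (-(N + 1)) := by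
  have : Finset.Icc (-((N + 1 : ℕ) : ℤ)) ((N + 1 : ℕ) : ℤ)
      = insert (-((N : ℤ) + 1)) (insert ((N : ℤ) + 1) (Finset.Icc (-(N : ℤ)) (N : ℤ))) := by
    ext k; simp only [Finset.mem_insert, Finset.mem_Icc]; push_cast; omega
  rw [this, Finset.sum_insert, Finset.sum_insert]
  · rw [add_comm, add_comm (f _)]
  · simp
  · simp only [Finset.mem_insert, Finset.mem_Icc]; omega

lemma sum_sin_zero (y : ℝ) (N : ℕ) :
    ∑ n ∈ Finset.Icc (-(N : ℤ)) (N : ℤ), Real.sin (n * y) = 0 := by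
  induction N with
  | zero => simp
  | succ N ih =>
    rw [sumIcc_succ, ih]; push_cast
    have : (-1 + -(N : ℝ)) * y = -((N + 1) * y) := by ring
    have : (-((N : ℝ) + 1)) * y = -((N + 1) * y) := by ring
    rw [this, Real.sin_neg]; ring

lemma dirichlet (y : ℝ) (N : ℕ) :
    (∑ n ∈ Finset.Icc (-(N : ℤ)) (N : ℤ), Real.cos (n * y)) * Real.sin (y / 2)
      = Real.sin ((N + 1 / 2) * y) := by
  induction N with
  | zero => simp; ring_nf
  | succ N ih =>
    rw [sumIcc_succ, add_mul, add_mul, ih]; push_cast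
    have : (-((N : ℝ) + 1)) * y = -((N + 1) * y) := by ring
    rw [this, Real.cos_neg]
    have e1 : ((N : ℝ) + 1 / 2) * y = (N + 1) * y - y / 2 := by ring
    have e2 : ((N : ℝ) + 1 + 1 / 2) * y = (N + 1) * y + y / 2 := by ring
    rw [e1, e2, Real.sin_sub, Real.sin_add]; ring

lemma int_cosY (N : ℕ) : ∫ x in D.a..D.b, D.ρ x *
    (∑ n ∈ Finset.Icc (-(N : ℤ)) (N : ℤ), Real.cos (n * (Real.pi - D.X x))) = D.Lam := by
  have c1 := D.hρ
  have c2 := D.cX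
  simp only [Finset.mul_sum]
  rw [intervalIntegral.integral_finsetSum]
  · rw [Finset.sum_eq_single (0 : ℤ)]
    · simp [Lam, ξ]
    · intro n _ hn
      have : ∀ x, D.ρ x * Real.cos (n * (Real.pi - D.X x)) = (-1) ^ n * (D.ρ x * Real.cos (n * D.X x)) := by
        intro x
        rw [mul_sub, Real.cos_sub, Real.sin_int_mul_pi, Real.cos_int_mul_pi]; ring
      simp only [this]
      rw [intervalIntegral.integral_const_mul, D.int_cos n hn, mul_zero]
    · intro h; simp at h
  · intro n _
    exact Continuous.intervalIntegrable (by fun_prop) _ _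

lemma sinY_bound : ∃ c : ℝ, 0 < c ∧ ∀ x ∈ Icc D.a D.b, c * (D.b - x) ≤ Real.sin ((Real.pi - D.X x) / 2) := by
  obtain ⟨x0, hx0, hmin⟩ := (isCompact_Icc (a := D.a) (b := D.b)).exists_isMinOn
    ⟨D.b, mem_b⟩ D.hρ.continuousOn
  have hL := D.Lam_pos
  have hr := D.ρpos x0
  refine ⟨D.ρ x0 / D.Lam, by positivity, fun x hx => ?_⟩
  have h1 : D.ρ x0 * (D.b - x) ≤ D.Lam - D.ξ x := by
    have e : D.Lam - D.ξ x = ∫ s in x..D.b, D.ρ s := by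
      rw [Lam, ξ, ξ, intervalIntegral.integral_interval_sub_left]
      all_goals exact D.hρ.intervalIntegrable _ _
    have e2 : D.ρ x0 * (D.b - x) = ∫ s in x..D.b, D.ρ x0 := by
      rw [intervalIntegral.integral_const]; simp; ring
    rw [e, e2]
    apply intervalIntegral.integral_mono_on hx.2
    · exact intervalIntegrable_const
    · exact D.hρ.intervalIntegrable _ _
    intro y hy
    exact hmin ⟨hx.1.trans hy.1, hy.2⟩
  have hX0 : 0 ≤ D.X x := by
    have := D.X_mono.monotone hx.1; simpa using this
  have hX1 : D.X x ≤ Real.pi := by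
    have := D.X_mono.monotone hx.2; simpa using this
  have h2 := Real.mul_le_sin (x := (Real.pi - D.X x) / 2) (by linarith) (by linarith)
  refine le_trans ?_ h2
  have h3 : 2 / Real.pi * ((Real.pi - D.X x) / 2) = (D.Lam - D.ξ x) / D.Lam := by
    have := Real.pi_ne_zero
    rw [X]; field_simp
  rw [h3, div_mul_eq_mul_div]
  gcongr

lemma free_term (F : ℝ → ℂ) (n : ℤ) (x : ℝ) : (-1 : ℝ) ^ n * (F x * conj (D.E δ n x)).re =
    (F x * conj (D.E δ 0 x)).re * Real.cos (n * (Real.pi - D.X x))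
    - (F x * conj (D.E δ 0 x)).im * Real.sin (n * (Real.pi - D.X x)) := by
  rw [D.E_eq δ n, map_mul, ← Complex.exp_conj]
  have : conj (I * ((n * D.X x : ℝ) : ℂ)) = ((-(n * D.X x) : ℝ) : ℂ) * I := by
    simp only [map_mul, Complex.conj_I, Complex.conj_ofReal]; push_cast; ring
  rw [this, mul_left_comm, Complex.mul_re, Complex.exp_ofReal_mul_I_re, Complex.exp_ofReal_mul_I_im,
    mul_sub (n : ℝ), Real.cos_sub, Real.sin_sub, Real.sin_int_mul_pi, Real.cos_int_mul_pi,
    Real.cos_neg, Real.sin_neg]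
  ring

lemma neg_one_sq (n : ℤ) : (-1 : ℝ) ^ n * (-1 : ℝ) ^ n = 1 := by
  rw [← mul_zpow]; simp

/-- convergence of the unperturbed series at the right end -/
lemma free_lim {F F' : ℝ → ℂ} (hF : ∀ x, HasDerivAt F (F' x) x) (cF' : Continuous F') :
    Tendsto (fun N : ℕ => ∑ n ∈ Finset.Icc (-(N : ℤ)) (N : ℤ),
      D.Lam⁻¹ * ((-1 : ℝ) ^ n * D.ip (D.E δ n) F)) atTop (𝓝 (F D.b * conj (D.E δ 0 D.b)).re) := by
  have cF : Continuous F := continuous_iff_continuousAt.2 fun x => (hF x).continuousAt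
  have c1 := D.hρ
  have c2 := D.cX
  have cm := D.hm
  have c3 : ∀ n, Continuous fun s => conj (D.E δ n s) := fun n =>
    Complex.continuous_conj.comp (D.cE δ n)
  have c30 := c3 0
  have ce := D.cE δ 0
  let V : ℝ → ℂ := fun x => F x * conj (D.E δ 0 x)
  have cV : Continuous V := by simp only [V]; fun_prop
  let H : ℝ → ℝ := fun x => (V x).re
  have cH : Continuous H := Complex.continuous_re.comp cV
  let Y : ℝ → ℝ := fun x => Real.pi - D.X x
  have cY : Continuous Y := by simp only [Y]; fun_prop
  obtain ⟨c, hc0, hc⟩ := sinY_bound (D := D)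
  have hLip : ∃ L : ℝ, 0 < L ∧ ∀ x ∈ Icc D.a D.b, |H x - H D.b| ≤ L * (D.b - x) := by
    have hV : ∀ x, HasDerivAt V (F' x * conj (D.E δ 0 x) + F x * conj (I * (D.om δ 0 * D.ρ x - D.m x) * D.E δ 0 x)) x :=
      fun x => (hF x).mul (hE δ 0 x).star
    have cV' : Continuous fun x => (F' x * conj (D.E δ 0 x) + F x * conj (I * (D.om δ 0 * D.ρ x - D.m x) * D.E δ 0 x)) := by
      have : Continuous fun x => conj (I * (D.om δ 0 * D.ρ x - D.m x) * D.E δ 0 x) :=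
        Complex.continuous_conj.comp (by fun_prop)
      fun_prop
    obtain ⟨L, hL0, hL⟩ := D.bdd cV'
    refine ⟨L, hL0, fun x hx => ?_⟩
    have h1 := (convex_Icc D.a D.b).norm_image_sub_le_of_norm_hasDerivWithin_le
      (fun y hy => (hV y).hasDerivWithinAt) hL mem_b hx
    have h2 : |H x - H D.b| ≤ ‖V x - V D.b‖ := by
      simp only [H]; rw [← Complex.sub_re]; exact Complex.abs_re_le_norm _
    refine h2.trans (h1.trans_eq ?_)
    rw [Real.norm_eq_abs, abs_sub_comm, abs_of_nonneg (by linarith [hx.2])]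
  obtain ⟨L, hL0, hL⟩ := hLip
  let K : ℝ → ℝ := fun x => (H x - H D.b) / Real.sin (Y x / 2)
  let u : ℝ → ℂ := fun x => (K x : ℂ) * (-I * cexp (((Y x / 2 : ℝ) : ℂ) * I) * D.E δ 0 x)
  have hu : MemLp (D.wt u) 2 D.mu := by
    refine D.memL ?_ (L / c) ?_
    · have m1 : Measurable K := by
        apply Measurable.div
        · exact (cH.sub continuous_const).measurable
        · exact (Real.continuous_sin.comp (by fun_prop)).measurable
      have m2 : Continuous fun x => (-I * cexp (((Y x / 2 : ℝ) : ℂ) * I) * D.E δ 0 x) := by fun_prop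
      exact ((Complex.measurable_ofReal.comp m1).mul m2.measurable).aestronglyMeasurable
    · intro x hx
      have hx' := Ioo_subset_Icc_self hx
      simp only [u]
      rw [norm_mul, norm_mul, norm_mul, E_norm, Complex.norm_exp_ofReal_mul_I, norm_neg, Complex.norm_I,
        Complex.norm_real, Real.norm_eq_abs]
      simp only [mul_one, K]
      have h1 := hc x hx'
      have h2 : 0 < D.b - x := by linarith [hx.2]
      have h3 : 0 < c * (D.b - x) := by positivity
      have h4 : 0 < Real.sin (Y x / 2) := lt_of_lt_of_le h3 h1
      rw [abs_div, abs_of_pos h4, div_le_div_iff₀ h4 hc0]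
      calc _ ≤ L * (D.b - x) * c := by gcongr; exact hL x hx'
        _ = L * (c * (D.b - x)) := by ring
        _ ≤ _ := by gcongr
  have hRL := (D.RL δ hu).comp (Nat.cast_injective (R := ℤ)).tendsto_cofinite
  rw [Nat.cofinite_eq_atTop] at hRL
  have hRL2 : Tendsto (fun N : ℕ => D.Lam⁻¹ * ((-1 : ℝ) ^ (N : ℤ) * D.ip (D.E δ (N : ℤ)) u)) atTop (𝓝 0) := by
    rw [show (0 : ℝ) = D.Lam⁻¹ * 0 by simp]
    apply Tendsto.const_mul
    rw [tendsto_zero_iff_norm_tendsto_zero]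
    have := hRL.norm
    simpa using this
  have hpos : 0 < D.Lam := D.Lam_pos
  have key : ∀ N : ℕ, ∑ n ∈ Finset.Icc (-(N : ℤ)) (N : ℤ),
      D.Lam⁻¹ * ((-1 : ℝ) ^ n * D.ip (D.E δ n) F)
      = D.Lam⁻¹ * ((-1 : ℝ) ^ (N : ℤ) * D.ip (D.E δ (N : ℤ)) u) + H D.b := by
    intro N
    rw [← Finset.mul_sum]
    have s1 : ∑ n ∈ Finset.Icc (-(N : ℤ)) (N : ℤ), ((-1 : ℝ) ^ n * D.ip (D.E δ n) F)
        = ∫ x in D.a..D.b, D.ρ x * (H x * ∑ n ∈ Finset.Icc (-(N : ℤ)) (N : ℤ), Real.cos (n * Y x)) := by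
      simp only [ip, ← intervalIntegral.integral_const_mul]
      rw [← intervalIntegral.integral_finsetSum]
      · congr 1; ext x
        have : ∀ n : ℤ, (-1 : ℝ) ^ n * (D.ρ x * (F x * conj (D.E δ n x)).re)
            = D.ρ x * (H x * Real.cos (n * Y x)) - D.ρ x * (V x).im * Real.sin (n * Y x) := by
          intro n
          rw [mul_left_comm, free_term]; simp only [H, V, Y]; ring
        simp only [this]
        rw [Finset.sum_sub_distrib, ← Finset.mul_sum, ← Finset.mul_sum, ← Finset.mul_sum, sum_sin_zero]
        ring
      · intro n _
        have := c3 n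
        have c4 : Continuous fun x => (F x * conj (D.E δ n x)).re :=
          Complex.continuous_re.comp (by fun_prop)
        exact Continuous.intervalIntegrable (by fun_prop) _ _
    have s2 : (-1 : ℝ) ^ (N : ℤ) * D.ip (D.E δ (N : ℤ)) u
        = ∫ x in D.a..D.b, D.ρ x * ((H x - H D.b) * ∑ n ∈ Finset.Icc (-(N : ℤ)) (N : ℤ), Real.cos (n * Y x)) := by
      rw [ip, ← intervalIntegral.integral_const_mul]
      apply intervalIntegral.integral_congr_ae
      have hb : ∀ᵐ x : ℝ, x ≠ D.b := by simp [ae_iff]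
      filter_upwards [hb] with x hxb hx
      rw [uIoc_of_le D.hab.le] at hx
      have hx' := Ioc_subset_Icc_self hx
      have h2 : 0 < D.b - x := by
        have := lt_of_le_of_ne hx.2 hxb; linarith
      have h3 : 0 < c * (D.b - x) := by positivity
      have h4 : 0 < Real.sin (Y x / 2) := lt_of_lt_of_le h3 (hc x hx')
      rw [mul_left_comm, free_term]
      have e0 : u x * conj (D.E δ 0 x) = ((K x : ℝ) : ℂ) * (-I * cexp (((Y x / 2 : ℝ) : ℂ) * I)) := by
        have h1 : D.E δ 0 x * conj (D.E δ 0 x) = 1 := by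
          rw [Complex.mul_conj, Complex.normSq_eq_norm_sq, E_norm]; simp
        simp only [u]
        linear_combination (K x : ℂ) * (-I * cexp (((Y x / 2 : ℝ) : ℂ) * I)) * h1
      rw [e0, Complex.re_ofReal_mul, Complex.im_ofReal_mul, neg_mul, Complex.neg_re, Complex.neg_im,
        Complex.I_mul_re, Complex.I_mul_im, Complex.exp_ofReal_mul_I_re, Complex.exp_ofReal_mul_I_im]
      have e1 : (H x - H D.b) = K x * Real.sin (Y x / 2) := by
        simp only [K]; field_simp
      have e2 := dirichlet (Y x) N
      have e3 : ((N : ℝ) + 1 / 2) * Y x = N * Y x + Y x / 2 := by ring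
      rw [e3, Real.sin_add] at e2
      rw [e1]
      simp only [Int.cast_natCast]
      change _ * (K x * - -Real.sin (Y x / 2) * Real.cos (N * Y x) - K x * -Real.cos (Y x / 2) * Real.sin (N * Y x)) = _
      linear_combination -(D.ρ x * K x) * e2
    have s3 : (∫ x in D.a..D.b, D.ρ x * ((H x - H D.b) * ∑ n ∈ Finset.Icc (-(N : ℤ)) (N : ℤ), Real.cos (n * Y x)))
        = (∫ x in D.a..D.b, D.ρ x * (H x * ∑ n ∈ Finset.Icc (-(N : ℤ)) (N : ℤ), Real.cos (n * Y x)))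
          - H D.b * D.Lam := by
      rw [← int_cosY N, ← intervalIntegral.integral_const_mul, ← intervalIntegral.integral_sub]
      · congr 1; ext x; simp only [Y]; ring
      all_goals exact Continuous.intervalIntegrable (by fun_prop) _ _
    rw [s1, s2, s3]
    field_simp
    ring
  simp only [key]
  have := hRL2.add_const (H D.b)
  rwa [zero_add] at this
end
end DDat

open Set Filter Topology MeasureTheory Complex
open scoped NNReal ComplexConjugate
namespace DDat
noncomputable section
variable {D : DDat} {δ : ℝ} {lam : ℤ → ℝ}

variable (D) in
/-- difference between perturbed and free terms -/
def Tm (δ : ℝ) (lam : ℤ → ℝ) (F : ℝ → ℂ) (n : ℤ) : ℝ :=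
  (-1 : ℝ) ^ n * ((D.NN (lam n))⁻¹ * D.rr (lam n) * D.ip (D.Z (lam n)) F - D.Lam⁻¹ * D.ip (D.E δ n) F)

lemma Eig.Tm_bound (h : D.Eig δ lam) : ∃ C : ℝ, 0 < C ∧ ∀ n, ∀ F F' : ℝ → ℂ,
    (∀ x, HasDerivAt F (F' x) x) → Continuous F' →
    |D.Tm δ lam F n| ≤ C * D.MM F F' * (1 / dd n ^ 2) := by
  obtain ⟨C, hC0, hC⟩ := h.B3
  obtain ⟨C6, hC60, hC6⟩ := h.A6
  obtain ⟨C10, hC100, hC10⟩ := h.A10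
  have hL := D.Lam_pos
  refine ⟨C10 * (1 + C6) * C + D.Lam⁻¹ * C6 * C + D.Lam⁻¹ * C, by positivity, fun n F F' hF cF' => ?_⟩
  obtain ⟨h1, h2⟩ := hC n F F' hF cF'
  have h6 := hC6 n
  have h10 := hC10 n
  have hM := MM_nonneg (D := D) F F'
  have hd := dd_pos n
  have hd1 := dd_one n
  have hr : |D.rr (lam n)| ≤ 1 + C6 := by
    have e : |D.rr (lam n)| ≤ |D.rr (lam n) - 1| + 1 := by
      have := abs_add_le (D.rr (lam n) - 1) 1
      simpa using this
    nlinarith [abs_nonneg (D.rr (lam n) - 1)]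
  rw [mul_one_div, le_div_iff₀ (by positivity), Tm, abs_mul, abs_zpow, abs_neg, abs_one, one_zpow, one_mul]
  have e : (D.NN (lam n))⁻¹ * D.rr (lam n) * D.ip (D.Z (lam n)) F - D.Lam⁻¹ * D.ip (D.E δ n) F
      = ((D.NN (lam n))⁻¹ - D.Lam⁻¹) * D.rr (lam n) * D.ip (D.Z (lam n)) F
        + D.Lam⁻¹ * (D.rr (lam n) - 1) * D.ip (D.Z (lam n)) F
        + D.Lam⁻¹ * (D.ip (D.Z (lam n)) F - D.ip (D.E δ n) F) := by ring
  rw [e]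
  have t1 : |((D.NN (lam n))⁻¹ - D.Lam⁻¹) * D.rr (lam n) * D.ip (D.Z (lam n)) F| * dd n ^ 2
      ≤ C10 * (1 + C6) * (C * D.MM F F') := by
    rw [abs_mul, abs_mul]
    calc _ = (|(D.NN (lam n))⁻¹ - D.Lam⁻¹| * dd n) * |D.rr (lam n)| * (|D.ip (D.Z (lam n)) F| * dd n) := by ring
      _ ≤ _ := by gcongr
  have t2 : |D.Lam⁻¹ * (D.rr (lam n) - 1) * D.ip (D.Z (lam n)) F| * dd n ^ 2
      ≤ D.Lam⁻¹ * C6 * (C * D.MM F F') := by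
    rw [abs_mul, abs_mul, abs_of_pos (inv_pos.2 hL)]
    calc _ = D.Lam⁻¹ * (|D.rr (lam n) - 1| * dd n) * (|D.ip (D.Z (lam n)) F| * dd n) := by ring
      _ ≤ _ := by gcongr
  have t3 : |D.Lam⁻¹ * (D.ip (D.Z (lam n)) F - D.ip (D.E δ n) F)| * dd n ^ 2
      ≤ D.Lam⁻¹ * (C * D.MM F F') := by
    rw [abs_mul, abs_of_pos (inv_pos.2 hL), mul_assoc]
    gcongr
  calc _ ≤ (|((D.NN (lam n))⁻¹ - D.Lam⁻¹) * D.rr (lam n) * D.ip (D.Z (lam n)) F|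
        + |D.Lam⁻¹ * (D.rr (lam n) - 1) * D.ip (D.Z (lam n)) F|
        + |D.Lam⁻¹ * (D.ip (D.Z (lam n)) F - D.ip (D.E δ n) F)|) * dd n ^ 2 := by
          gcongr
          exact (abs_add_le _ _).trans (by gcongr; exact abs_add_le _ _)
    _ ≤ _ := by linarith

lemma Eig.Tm_summable (h : D.Eig δ lam) {F F' : ℝ → ℂ} (hF : ∀ x, HasDerivAt F (F' x) x)
    (cF' : Continuous F') : Summable (D.Tm δ lam F) := by
  obtain ⟨C, hC0, hC⟩ := h.Tm_bound
  exact Summable.of_norm_bounded (summable_dd.mul_left _) fun n => hC n F F' hF cF'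

lemma hasSum_symm {f : ℤ → ℝ} {s : ℝ} (hf : HasSum f s) :
    Tendsto (fun N : ℕ => ∑ n ∈ Finset.Icc (-(N : ℤ)) (N : ℤ), f n) atTop (𝓝 s) :=
  hf.comp (Finset.tendsto_Icc_neg.comp tendsto_natCast_atTop_atTop)

lemma Eig.E0 (h : D.Eig δ lam) {F F' : ℝ → ℂ} (hF : ∀ x, HasDerivAt F (F' x) x)
    (cF' : Continuous F') (ha : F D.a = 0) (hb : F D.b = 0) : ∑' n, D.Tm δ lam F n = 0 := by
  have h1 := h.expand0 hF cF' ha hb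
  have hE : D.E δ 0 D.b ≠ 0 := by
    rw [← norm_ne_zero_iff, E_norm]; norm_num
  have h2 : HasSum (fun n => (-1 : ℝ) ^ n * ((D.NN (lam n))⁻¹ * D.rr (lam n) * D.ip (D.Z (lam n)) F)) 0 := by
    have h3 := (h1.mul_left (D.E δ 0 D.b)⁻¹)
    rw [mul_zero] at h3
    rw [← Complex.hasSum_ofReal]
    simp only [Complex.ofReal_zero]
    have e : ∀ n, (((-1 : ℝ) ^ n * ((D.NN (lam n))⁻¹ * D.rr (lam n) * D.ip (D.Z (lam n)) F) : ℝ) : ℂ)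
        = (D.E δ 0 D.b)⁻¹ * ((((D.NN (lam n))⁻¹ * D.ip (D.Z (lam n)) F : ℝ) : ℂ) * D.Z (lam n) D.b) := by
      intro n
      rw [h.Zb n, Eb (D := D) (δ := δ) n]; push_cast; field_simp
    simp only [e]; exact h3
  have h4 := hasSum_symm h2
  have h5 := free_lim (D := D) (δ := δ) hF cF'
  rw [hb] at h5
  have h6 := hasSum_symm (h.Tm_summable hF cF').hasSum
  have h7 := h4.sub h5
  simp only [zero_mul, Complex.zero_re, sub_zero] at h7
  refine tendsto_nhds_unique h6 (h7.congr fun N => ?_)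
  rw [← Finset.sum_sub_distrib]
  refine Finset.sum_congr rfl fun n _ => ?_
  rw [Tm]; ring

variable (D) in
def ss (x : ℝ) : ℝ := (x - D.a) / (D.b - D.a)
variable (D) in
def chi (j : ℕ) (x : ℝ) : ℝ := 1 - D.ss x ^ (j + 1) - (1 - D.ss x) ^ (j + 1)
variable (D) in
def chi' (j : ℕ) (x : ℝ) : ℝ := -(((j : ℝ) + 1) * D.ss x ^ j / (D.b - D.a)) + ((j : ℝ) + 1) * (1 - D.ss x) ^ j / (D.b - D.a)

lemma css : Continuous D.ss := by unfold ss; fun_prop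
lemma hss (x : ℝ) : HasDerivAt D.ss (1 / (D.b - D.a)) x :=
  ((hasDerivAt_id x).sub_const _).div_const _
lemma ssa : D.ss D.a = 0 := by simp [ss]
lemma ssb : D.ss D.b = 1 := by
  have : D.b - D.a ≠ 0 := by linarith [D.hab]
  simp [ss, this]
lemma ss_mem {x : ℝ} (hx : x ∈ Icc D.a D.b) : 0 ≤ D.ss x ∧ D.ss x ≤ 1 := by
  have : 0 < D.b - D.a := by linarith [D.hab]
  unfold ss
  exact ⟨div_nonneg (by linarith [hx.1]) this.le, by rw [div_le_one this]; linarith [hx.2]⟩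
lemma hp1 (j : ℕ) (x : ℝ) : HasDerivAt (fun x => D.ss x ^ (j + 1)) (((j : ℝ) + 1) * D.ss x ^ j / (D.b - D.a)) x := by
  refine ((hss x).pow (j + 1)).congr_deriv ?_
  push_cast; simp; ring
lemma hp2 (j : ℕ) (x : ℝ) : HasDerivAt (fun x => (1 - D.ss x) ^ (j + 1)) (-(((j : ℝ) + 1) * (1 - D.ss x) ^ j / (D.b - D.a))) x := by
  refine (((hss x).const_sub 1).pow (j + 1)).congr_deriv ?_
  push_cast; simp; ring
lemma hchi (j : ℕ) (x : ℝ) : HasDerivAt (D.chi j) (D.chi' j x) x := by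
  refine (((hp1 j x).const_sub 1).sub (hp2 j x)).congr_deriv ?_
  rw [chi']; ring
lemma cchi (j : ℕ) : Continuous (D.chi j) := by have := css (D := D); unfold chi; fun_prop
lemma cchi' (j : ℕ) : Continuous (D.chi' j) := by have := css (D := D); unfold chi'; fun_prop
lemma chi_abs (j : ℕ) {x : ℝ} (hx : x ∈ Icc D.a D.b) : |D.chi j x| ≤ 1 := by
  obtain ⟨h0, h1⟩ := ss_mem hx
  have e1 : D.ss x ^ (j + 1) ≤ D.ss x := pow_le_of_le_one h0 h1 (by omega)
  have e2 : (1 - D.ss x) ^ (j + 1) ≤ 1 - D.ss x := pow_le_of_le_one (by linarith) (by linarith) (by omega)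
  have e3 : 0 ≤ D.ss x ^ (j + 1) := by positivity
  have e4 : 0 ≤ (1 - D.ss x) ^ (j + 1) := pow_nonneg (by linarith) _
  rw [abs_le, chi]; constructor <;> linarith

lemma chi_lim {x : ℝ} (hx : x ∈ Ioo D.a D.b) : Tendsto (fun j => D.chi j x) atTop (𝓝 1) := by
  have hp : 0 < D.b - D.a := by linarith [D.hab]
  have h0 : 0 < D.ss x := div_pos (by linarith [hx.1]) hp
  have h1 : D.ss x < 1 := by unfold ss; rw [div_lt_one hp]; linarith [hx.2]
  have t1 := (tendsto_add_atTop_iff_nat 1).2 (tendsto_pow_atTop_nhds_zero_of_lt_one h0.le h1)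
  have t2 := (tendsto_add_atTop_iff_nat 1).2 (tendsto_pow_atTop_nhds_zero_of_lt_one (r := 1 - D.ss x) (by linarith) (by linarith))
  have := (t1.const_sub 1).sub t2
  simpa [chi] using this

lemma MM_chi {F F' : ℝ → ℂ} (cF : Continuous F) (cF' : Continuous F') :
    ∃ M : ℝ, ∀ j, D.MM (fun x => F x * (D.chi j x : ℂ)) (fun x => F' x * D.chi j x + F x * D.chi' j x) ≤ M := by
  obtain ⟨K, hK0, hK⟩ := D.bdd cF
  have hp : 0 < D.b - D.a := by linarith [D.hab]
  refine ⟨(∫ s in D.a..D.b, ‖F' s‖) + K * 2, fun j => ?_⟩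
  have cs := css (D := D)
  have c1 := cchi (D := D) j
  have c2 := cchi' (D := D) j
  have hb : D.chi j D.b = 0 := by simp [chi, ssb]
  rw [MM, hb]
  simp only [Complex.ofReal_zero, mul_zero, norm_zero, zero_add]
  have i1 : ∫ x in D.a..D.b, ((j : ℝ) + 1) * D.ss x ^ j / (D.b - D.a) = 1 := by
    rw [intervalIntegral.integral_eq_sub_of_hasDerivAt (fun x _ => hp1 j x)
      (Continuous.intervalIntegrable (by fun_prop) _ _), ssa, ssb]; simp
  have i2 : ∫ x in D.a..D.b, ((j : ℝ) + 1) * (1 - D.ss x) ^ j / (D.b - D.a) = 1 := by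
    have := intervalIntegral.integral_eq_sub_of_hasDerivAt (a := D.a) (b := D.b) (fun x _ => hp2 (D := D) j x)
      (Continuous.intervalIntegrable (by fun_prop) _ _)
    rw [intervalIntegral.integral_neg, ssa, ssb, sub_self, sub_zero, zero_pow (by omega), one_pow] at this
    linarith
  have i3 : (∫ s in D.a..D.b, ‖F' s‖) + K * 2 = ∫ x in D.a..D.b, (‖F' x‖ +
      K * (((j : ℝ) + 1) * D.ss x ^ j / (D.b - D.a) + ((j : ℝ) + 1) * (1 - D.ss x) ^ j / (D.b - D.a))) := by
    rw [intervalIntegral.integral_add, intervalIntegral.integral_const_mul, intervalIntegral.integral_add, i1, i2]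
    · norm_num
    all_goals exact Continuous.intervalIntegrable (by fun_prop) _ _
  rw [i3]
  apply intervalIntegral.integral_mono_on D.hab.le
  · exact Continuous.intervalIntegrable (by fun_prop) _ _
  · exact Continuous.intervalIntegrable (by fun_prop) _ _
  intro x hx
  obtain ⟨h0, h1⟩ := ss_mem hx
  refine (norm_add_le _ _).trans ?_
  rw [norm_mul, norm_mul, Complex.norm_real, Complex.norm_real, Real.norm_eq_abs, Real.norm_eq_abs]
  have e0 := chi_abs j hx
  have h2 : 0 ≤ 1 - D.ss x := by linarith
  have e1 : |D.chi' j x| ≤ ((j : ℝ) + 1) * D.ss x ^ j / (D.b - D.a) + ((j : ℝ) + 1) * (1 - D.ss x) ^ j / (D.b - D.a) := by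
    rw [chi']
    refine (abs_add_le _ _).trans ?_
    rw [abs_neg, abs_of_nonneg (by positivity), abs_of_nonneg (by positivity)]
  have e2 := hK x hx
  have e3 : ‖F' x‖ * |D.chi j x| ≤ ‖F' x‖ := by nlinarith [norm_nonneg (F' x)]
  have e4 : ‖F x‖ * |D.chi' j x| ≤ K * (((j : ℝ) + 1) * D.ss x ^ j / (D.b - D.a) + ((j : ℝ) + 1) * (1 - D.ss x) ^ j / (D.b - D.a)) := by
    gcongr
  linarith

lemma ip_chi {F u : ℝ → ℂ} (cF : Continuous F) (cu : Continuous u) :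
    Tendsto (fun j => D.ip u (fun x => F x * (D.chi j x : ℂ))) atTop (𝓝 (D.ip u F)) := by
  unfold ip
  have c1 := D.hρ
  have cuc : Continuous fun s => conj (u s) := Complex.continuous_conj.comp cu
  apply intervalIntegral.tendsto_integral_filter_of_dominated_convergence
    (fun x => |D.ρ x| * ‖F x * conj (u x)‖)
  · refine Eventually.of_forall fun j => Continuous.aestronglyMeasurable ?_
    have := cchi (D := D) j
    exact c1.mul (Complex.continuous_re.comp (by fun_prop))
  · refine Eventually.of_forall fun j => Eventually.of_forall fun x hx => ?_
    rw [uIoc_of_le D.hab.le] at hx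
    have hx := Ioc_subset_Icc_self hx
    rw [norm_mul, Real.norm_eq_abs]
    gcongr
    refine (Complex.abs_re_le_norm _).trans ?_
    rw [mul_right_comm, norm_mul, Complex.norm_real]
    have := chi_abs j hx
    rw [← Real.norm_eq_abs] at this
    nlinarith [norm_nonneg (F x * conj (u x))]
  · exact Continuous.intervalIntegrable (by fun_prop) _ _
  · have hb : ∀ᵐ x : ℝ, x ≠ D.b := by simp [ae_iff]
    filter_upwards [hb] with x hxb hx
    rw [uIoc_of_le D.hab.le] at hx
    have hl := chi_lim (D := D) ⟨hx.1, lt_of_le_of_ne hx.2 hxb⟩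
    have e : ∀ j, D.ρ x * (F x * (D.chi j x : ℂ) * conj (u x)).re = D.chi j x * (D.ρ x * (F x * conj (u x)).re) := by
      intro j
      rw [mul_right_comm, mul_comm _ (D.chi j x : ℂ), Complex.re_ofReal_mul]; ring
    simp only [e]
    simpa using hl.mul_const (D.ρ x * (F x * conj (u x)).re)

lemma Eig.E1 (h : D.Eig δ lam) {F F' : ℝ → ℂ} (hF : ∀ x, HasDerivAt F (F' x) x)
    (cF' : Continuous F') : ∑' n, D.Tm δ lam F n = 0 := by
  have cF : Continuous F := continuous_iff_continuousAt.2 fun x => (hF x).continuousAt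
  obtain ⟨C, hC0, hC⟩ := h.Tm_bound
  obtain ⟨M, hM⟩ := MM_chi (D := D) cF cF'
  have hd : ∀ j x, HasDerivAt (fun x => F x * (D.chi j x : ℂ)) (F' x * D.chi j x + F x * D.chi' j x) x :=
    fun j x => (hF x).mul (hchi j x).ofReal_comp
  have cd : ∀ j, Continuous fun x => F' x * D.chi j x + F x * D.chi' j x := fun j => by
    have := cchi (D := D) j
    have := cchi' (D := D) j
    fun_prop
  have hz : ∀ j, ∑' n, D.Tm δ lam (fun x => F x * (D.chi j x : ℂ)) n = 0 := fun j =>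
    h.E0 (hd j) (cd j) (by simp [chi, ssa]) (by simp [chi, ssb])
  have ht : Tendsto (fun j => ∑' n, D.Tm δ lam (fun x => F x * (D.chi j x : ℂ)) n) atTop
      (𝓝 (∑' n, D.Tm δ lam F n)) := by
    refine tendsto_tsum_of_dominated_convergence (bound := fun n => C * M * (1 / dd n ^ 2))
      (summable_dd.mul_left _) (fun n => ?_) (Eventually.of_forall fun j n => ?_)
    · unfold Tm
      exact (((ip_chi cF (D.cZ _)).const_mul _).sub ((ip_chi cF (D.cE _ _)).const_mul _)).const_mul _
    · refine (hC n _ _ (hd j) (cd j)).trans ?_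
      have := dd_pos n
      gcongr
      exact hM j
  simp only [hz] at ht
  exact (tendsto_nhds_unique ht tendsto_const_nhds)

theorem Eig.main (h : D.Eig δ lam) {F F' : ℝ → ℂ} (hF : ∀ x, HasDerivAt F (F' x) x)
    (cF' : Continuous F') : 
    Tendsto (fun N : ℕ => ∑ n ∈ Finset.Icc (-(N : ℤ)) (N : ℤ),
      (((D.NN (lam n))⁻¹ * D.ip (D.Z (lam n)) F : ℝ) : ℂ) * D.Z (lam n) D.b) atTop
      (𝓝 (((F D.b * conj (D.E δ 0 D.b)).re : ℂ) * D.E δ 0 D.b)) := by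
  have h6 := hasSum_symm (h.Tm_summable hF cF').hasSum
  rw [h.E1 hF cF'] at h6
  have h7 := h6.add (free_lim (D := D) (δ := δ) hF cF')
  rw [zero_add] at h7
  have h8 := ((Complex.continuous_ofReal.tendsto _).comp h7).mul_const (D.E δ 0 D.b)
  refine h8.congr fun N => ?_
  simp only [Function.comp_apply]
  rw [← Finset.sum_add_distrib]
  push_cast
  rw [Finset.sum_mul]
  refine Finset.sum_congr rfl fun n _ => ?_
  rw [h.Zb n, Eb (D := D) (δ := δ) n, Tm]; push_cast; ring
end
end DDat

open Set Filter Topology MeasureTheory Complex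
open scoped NNReal ComplexConjugate
namespace DDat
noncomputable section
variable {D : DDat}

lemma Zb_im (μ β : ℝ) : (D.Z μ D.b * cexp (I * β)).im = Real.exp (D.W μ D.b).re * Real.sin (D.Phi μ + β) := by
  rw [Z_eq, mul_assoc, ← Complex.exp_add, Complex.im_ofReal_mul, ← mul_add, ← Phi, mul_comm I, ← Complex.ofReal_add,
    Complex.exp_ofReal_mul_I_im]

lemma shift_of_strictMono {k : ℤ → ℤ} (hk : StrictMono k) (hs : Function.Surjective k) (n : ℤ) :
    k n = n + k 0 := by
  have h1 : ∀ n, k (n + 1) = k n + 1 := by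
    intro n
    have h := hk (show n < n + 1 by omega)
    obtain ⟨j, hj⟩ := hs (k n + 1)
    have h2 : n < j := hk.lt_iff_lt.1 (by omega)
    have h3 : k (n + 1) ≤ k j := hk.monotone (by omega)
    omega
  induction n using Int.induction_on with
  | zero => simp
  | succ i ih => rw [h1, ih]; ring
  | pred i ih =>
    have := h1 (-(i : ℤ) - 1)
    rw [sub_add_cancel, ih] at this
    omega

lemma ip_congr_smul {u v w y : ℝ → ℂ} {c d : ℝ} (h1 : ∀ x ∈ Icc D.a D.b, u x = c * v x)
    (h2 : ∀ x ∈ Icc D.a D.b, w x = d * y x) : D.ip u w = c * d * D.ip v y := by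
  rw [ip, ip, ← intervalIntegral.integral_const_mul]
  refine intervalIntegral.integral_congr fun x hx => ?_
  rw [uIcc_of_le D.hab.le] at hx
  simp only [h1 x hx, h2 x hx, map_mul, Complex.conj_ofReal]
  have : (d : ℂ) * y x * ((c : ℂ) * conj (v x)) = ((c * d : ℝ) : ℂ) * (y x * conj (v x)) := by push_cast; ring
  rw [this, Complex.re_ofReal_mul]; ring

theorem final (D : DDat) (β : ℝ) (lam : ℤ → ℝ) (z : ℤ → ℝ → ℂ)
    (hz : ∀ n, ∀ x ∈ Icc D.a D.b, HasDerivWithinAt (z n)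
      (I * (lam n * D.ρ x - D.m x) * z n x + D.τ x * conj (z n x)) (Icc D.a D.b) x)
    (hba : ∀ n, (z n D.a * conj (D.Z (lam n) D.a)).im = 0)
    (hbb : ∀ n, (z n D.b * cexp (I * β)).im = 0)
    (hord : ∀ n, lam n ≤ lam (n + 1))
    (hcompl : ∀ μ, (D.Z μ D.b * cexp (I * β)).im = 0 → ∃ n, lam n = μ)
    (horth : ∀ m n, D.ip (z m) (z n) = if m = n then 1 else 0)
    {F F' : ℝ → ℂ} (hF : ∀ x, HasDerivAt F (F' x) x) (cF' : Continuous F') :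
    Tendsto (fun N : ℕ => ∑ n ∈ Finset.Icc (-(N : ℤ)) (N : ℤ), (D.ip (z n) F : ℂ) * z n D.b) atTop
      (𝓝 (((F D.b * cexp (I * β)).re : ℂ) * cexp (-(I * β)))) := by
  have hmem : D.b ∈ Icc D.a D.b := ⟨D.hab.le, le_rfl⟩
  choose c hc using fun n => D.prop_Z (lam n) (z n) (hz n) (hba n)
  have hcN : ∀ m n, c m * c n * D.ip (D.Z (lam m)) (D.Z (lam n)) = if m = n then 1 else 0 := fun m n => by
    rw [← horth, ip_congr_smul (hc m) (hc n)]
  have hcn : ∀ n, c n * c n * D.NN (lam n) = 1 := fun n => by simpa [NN] using hcN n n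
  have hc0 : ∀ n, c n ≠ 0 := fun n h => by have := hcn n; rw [h] at this; simp at this
  have hN0 : ∀ n, D.NN (lam n) ≠ 0 := fun n h => by have := hcn n; rw [h] at this; simp at this
  have hinj : ∀ m n, m ≠ n → lam m ≠ lam n := fun m n hmn he => by
    have := hcN m n
    rw [if_neg hmn, he] at this
    exact mul_ne_zero (mul_ne_zero (hc0 m) (hc0 n)) (hN0 n) this
  have hlam : StrictMono lam := strictMono_int_of_lt_succ fun n =>
    lt_of_le_of_ne (hord n) (hinj _ _ (by omega))
  have hsin : ∀ n, ∃ k : ℤ, D.Phi (lam n) = k * Real.pi - β := fun n => by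
    have h1 := hbb n
    rw [hc n _ hmem, mul_assoc, Complex.im_ofReal_mul, Zb_im] at h1
    have h2 := (mul_eq_zero.1 ((mul_eq_zero.1 h1).resolve_left (hc0 n))).resolve_left (Real.exp_ne_zero _)
    obtain ⟨k, hk⟩ := Real.sin_eq_zero_iff.1 h2
    exact ⟨k, by linarith⟩
  choose k hk using hsin
  have hkm : StrictMono k := fun m n hmn => by
    have := D.Phi_strictMono (hlam hmn)
    rw [hk, hk] at this
    have h3 : (k m : ℝ) < k n := by
      by_contra! h4
      nlinarith [Real.pi_pos]
    exact_mod_cast h3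
  have hks : Function.Surjective k := fun j => by
    obtain ⟨μ, hμ⟩ := D.Phi_surj (j * Real.pi - β)
    obtain ⟨n, hn⟩ := hcompl μ (by rw [Zb_im, hμ, sub_add_cancel, Real.sin_int_mul_pi, mul_zero])
    refine ⟨n, ?_⟩
    have h1 := hk n
    rw [hn, hμ] at h1
    have h2 : (j : ℝ) * Real.pi = k n * Real.pi := by linarith
    have h3 := mul_right_cancel₀ Real.pi_ne_zero h2
    exact_mod_cast h3.symm
  set δ : ℝ := D.α - β + D.κ D.b + k 0 * Real.pi with hδ
  have hE : D.Eig δ lam := fun n => by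
    rw [hk, shift_of_strictMono hkm hks n]; push_cast; rw [hδ]; ring
  have hEb : D.E δ 0 D.b = (-1) ^ (k 0) * cexp (-(I * β)) := by
    rw [E, ← Complex.exp_pi_mul_I, ← Complex.exp_int_mul, ← Complex.exp_add]
    congr 1
    have := D.Lam_pos.ne'
    have h2 : D.ph (((0 : ℤ) * Real.pi + δ) / D.Lam) D.b = k 0 * Real.pi - β := by
      rw [ph, ← Lam, div_mul_cancel₀ _ this, hδ]; push_cast; ring
    rw [h2]; push_cast; ring
  have hlim : ((F D.b * conj (D.E δ 0 D.b)).re : ℂ) * D.E δ 0 D.b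
      = ((F D.b * cexp (I * β)).re : ℂ) * cexp (-(I * β)) := by
    have hcj : conj (cexp (-(I * β))) = cexp (I * β) := by
      rw [← Complex.exp_conj]; simp
    rw [hEb, map_mul, hcj, map_zpow₀, map_neg, map_one]
    rcases Int.even_or_odd (k 0) with h | h
    · rw [h.neg_one_zpow]; simp
    · rw [h.neg_one_zpow]
      simp only [neg_mul, one_mul, mul_neg, Complex.neg_re, Complex.ofReal_neg, neg_neg]
  have := hE.main hF cF'
  rw [hlim] at this
  refine this.congr fun N => Finset.sum_congr rfl fun n _ => ?_
  rw [ip_congr_smul (D := D) (w := F) (y := F) (d := 1) (hc n) (by simp), hc n _ hmem]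
  have : (D.NN (lam n))⁻¹ = c n * c n := inv_eq_of_mul_eq_one_left (hcn n)
  rw [this]; push_cast; ring

lemma ext_C1 {a b : ℝ} (hab : a < b) {u : ℝ → ℂ} (hu : ContDiffOn ℝ 1 u (Icc a b)) :
    ∃ U U' : ℝ → ℂ, (∀ x, HasDerivAt U (U' x) x) ∧ Continuous U' ∧ ∀ x ∈ Icc a b, U x = u x := by
  have hc : ContinuousOn (derivWithin u (Icc a b)) (Icc a b) :=
    hu.continuousOn_derivWithin (uniqueDiffOn_Icc hab) le_rfl
  have cV : Continuous (IccExtend hab.le ((Icc a b).domRestrict (derivWithin u (Icc a b)))) :=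
    (continuousOn_iff_continuous_domRestrict.1 hc).Icc_extend'
  set V := IccExtend hab.le ((Icc a b).domRestrict (derivWithin u (Icc a b))) with hV
  refine ⟨fun x => u a + ∫ s in a..x, V s, V, fun x => ?_, cV, fun x hx => ?_⟩
  · exact (intervalIntegral.integral_hasDerivAt_right (cV.intervalIntegrable _ _)
      (cV.stronglyMeasurableAtFilter _ _) cV.continuousAt).const_add _
  · have : ∫ s in a..x, V s = u x - u a := by
      refine intervalIntegral.integral_eq_sub_of_hasDeriv_right_of_le hx.1
        (hu.continuousOn.mono (Icc_subset_Icc_right hx.2)) (fun y hy => ?_) (cV.intervalIntegrable _ _)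
      have hy' : y ∈ Icc a b := ⟨hy.1.le, hy.2.le.trans hx.2⟩
      have e : V y = derivWithin u (Icc a b) y := by rw [hV, IccExtend_of_mem _ _ hy']; rfl
      rw [e]
      have h1 := ((hu.differentiableOn (by norm_num)) y hy').hasDerivWithinAt
      exact (h1.hasDerivAt (Icc_mem_nhds hy.1 (hy.2.trans_le hx.2))).hasDerivWithinAt
    simp only [this]; ring

lemma ext_C0 {a b : ℝ} (hab : a < b) {u : ℝ → ℝ} (hu : ContinuousOn u (Icc a b)) :
    ∃ U : ℝ → ℝ, Continuous U ∧ (∀ x ∈ Icc a b, U x = u x) ∧ ∀ x, ∃ y ∈ Icc a b, U x = u y := by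
  refine ⟨IccExtend hab.le ((Icc a b).domRestrict u), (continuousOn_iff_continuous_domRestrict.1 hu).Icc_extend',
    fun x hx => ?_, fun x => ⟨_, (projIcc a b hab.le x).2, rfl⟩⟩
  rw [IccExtend_of_mem _ _ hx]; rfl
end
end DDat


end DiracProof

section DiracAux
open Set Filter Topology MeasureTheory Complex
open scoped NNReal ComplexConjugate

/-- The expansion theorem, without the hypotheses that are not needed. -/
theorem DDat.dirac_aux
    (a b : ℝ) (hab : a < b)
    (p q t ρ : ℝ → ℝ)
    (hp : ContDiffOn ℝ 1 p (Set.Icc a b)) (hq : ContDiffOn ℝ 1 q (Set.Icc a b))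
    (ht : ContDiffOn ℝ 1 t (Set.Icc a b)) (hρ : ContDiffOn ℝ 1 ρ (Set.Icc a b))
    (hρpos : ∀ x ∈ Set.Icc a b, 0 < ρ x)
    (α β : ℝ)
    (lam : ℤ → ℝ) (f g : ℤ → ℝ → ℝ)
    (heig : ∀ n : ℤ, SatisfiesDiracSystem a b p q t ρ (lam n) (f n) (g n) ∧
      DiracBC a b α β (f n) (g n))
    (hord : ∀ n : ℤ, lam n ≤ lam (n + 1))
    (hcomplete : ∀ μ : ℝ, IsDiracEigenvalue a b p q t ρ α β μ → ∃ n, lam n = μ)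
    (horth : ∀ m n : ℤ,
      (∫ x in a..b, ρ x * (f m x * f n x + g m x * g n x)) = if m = n then 1 else 0)
    (F₁ F₂ : ℝ → ℝ)
    (hF₁ : ContDiffOn ℝ 1 F₁ (Set.Icc a b)) (hF₂ : ContDiffOn ℝ 1 F₂ (Set.Icc a b))
    (C : ℤ → ℝ)
    (hC : ∀ n, C n = ∫ x in a..b, ρ x * (f n x * F₁ x + g n x * F₂ x)) :
    Filter.Tendsto
      (fun N : ℕ =>
        ((∑ n ∈ Finset.Icc (-(N : ℤ)) (N : ℤ), C n * f n b),
         (∑ n ∈ Finset.Icc (-(N : ℤ)) (N : ℤ), C n * g n b)))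
      Filter.atTop
      (nhds (Real.sin β ^ 2 * F₁ b - Real.sin β * Real.cos β * F₂ b,
             -(Real.sin β * Real.cos β) * F₁ b + Real.cos β ^ 2 * F₂ b)) := by
  have hma : a ∈ Icc a b := ⟨le_rfl, hab.le⟩
  have hmb : b ∈ Icc a b := ⟨hab.le, le_rfl⟩
  have ofR : ∀ {u : ℝ → ℝ}, ContDiffOn ℝ 1 u (Icc a b) → ContDiffOn ℝ 1 (fun x => (u x : ℂ)) (Icc a b) :=
    fun hu => Complex.ofRealCLM.contDiff.comp_contDiffOn hu
  -- extend the coefficients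
  obtain ⟨R, cR, hR, hR2⟩ := DDat.ext_C0 hab hρ.continuousOn
  have Rpos : ∀ x, 0 < R x := fun x => by
    obtain ⟨y, hy, e⟩ := hR2 x
    rw [e]; exact hρpos y hy
  obtain ⟨m, cm, hm, -⟩ := DDat.ext_C0 hab (u := fun x => (p x + q x) / 2)
    ((hp.continuousOn.add hq.continuousOn).div_const _)
  obtain ⟨G, G', hG, cG', hGe⟩ := DDat.ext_C1 hab
    (u := fun x => ((t x : ℂ) + I * (((p x : ℂ) - (q x : ℂ)) * (1 / 2))) * (((ρ x)⁻¹ : ℝ) : ℂ))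
    (((ofR ht).add (contDiffOn_const.mul (((ofR hp).sub (ofR hq)).mul contDiffOn_const))).mul
      (ofR (hρ.inv fun x hx => (hρpos x hx).ne')))
  obtain ⟨F, F', hF, cF', hFe⟩ := DDat.ext_C1 hab
    (u := fun x => (F₂ x : ℂ) + I * (F₁ x : ℂ)) ((ofR hF₂).add (contDiffOn_const.mul (ofR hF₁)))
  let D : DDat := ⟨a, b, hab, R, m, G, G', α, cR, Rpos, cm, hG, cG'⟩
  have hτ : ∀ x ∈ Icc a b, D.τ x = (t x : ℂ) + I * (((p x : ℂ) - (q x : ℂ)) * (1 / 2)) := fun x hx => by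
    change G x * (R x : ℂ) = _
    have h0 : (ρ x : ℂ) ≠ 0 := by exact_mod_cast (hρpos x hx).ne'
    rw [hGe x hx, hR x hx, Complex.ofReal_inv, mul_assoc, inv_mul_cancel₀ h0, mul_one]
  have hmx : ∀ x ∈ Icc a b, (D.m x : ℂ) = ((p x : ℂ) + q x) * (1 / 2) := fun x hx => by
    change (m x : ℂ) = _
    rw [hm x hx]; push_cast; ring
  have hρx : ∀ x ∈ Icc a b, (D.ρ x) = ρ x := hR
  -- the right hand side of the system in complex form
  have hrhs : ∀ (l : ℝ) (x : ℝ), x ∈ Icc a b → ∀ u : ℂ,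
      I * (l * D.ρ x - D.m x) * u + D.τ x * conj u
        = ((t x * u.re + (p x - l * ρ x) * u.im : ℝ) : ℂ)
          + I * ((-(t x * u.im + (q x - l * ρ x) * u.re) : ℝ) : ℂ) := by
    intro l x hx u
    rw [hτ x hx, hmx x hx, hρx x hx]
    apply Complex.ext
    · simp; ring
    · simp; ring
  have hconj : ∀ l, conj (D.Z l D.a) = cexp (I * α) := fun l => by
    rw [DDat.Za, ← Complex.exp_conj]; simp [D]
  have him : ∀ (u v γ : ℝ), (((v : ℂ) + I * (u : ℂ)) * cexp (I * γ)).im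
      = u * Real.cos γ + v * Real.sin γ := by
    intro u v γ
    rw [mul_comm I (γ : ℂ), Complex.mul_im, Complex.exp_ofReal_mul_I_im, Complex.exp_ofReal_mul_I_re]
    simp; ring
  have him' : ∀ (w : ℂ) (γ : ℝ), (w * cexp (I * γ)).im
      = w.im * Real.cos γ + w.re * Real.sin γ := by
    intro w γ
    rw [mul_comm I (γ : ℂ), Complex.mul_im, Complex.exp_ofReal_mul_I_im, Complex.exp_ofReal_mul_I_re]
    ring
  have hip : ∀ (u v u' v' : ℝ → ℝ) (y w : ℝ → ℂ), (∀ x ∈ Icc a b, y x = (v x : ℂ) + I * (u x : ℂ)) →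
      (∀ x ∈ Icc a b, w x = (v' x : ℂ) + I * (u' x : ℂ)) →
      D.ip y w = ∫ x in a..b, ρ x * (u x * u' x + v x * v' x) := by
    intro u v u' v' y w hy hw
    rw [DDat.ip]
    refine intervalIntegral.integral_congr fun x hx => ?_
    replace hx : x ∈ Icc a b := by rwa [uIcc_of_le hab.le] at hx
    simp only [hρx x hx, hy x hx, hw x hx]
    simp; left; ring
  have hfin := D.final β lam (fun n x => (g n x : ℂ) + I * (f n x : ℂ)) (F := F) (F' := F')
    (by
      intro n x hx
      obtain ⟨f', g', h1, h2, -, -, h3, h4⟩ := (heig n).1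
      have e3 := h3 x hx
      have e4 := h4 x hx
      refine ((h2 x hx).ofReal_comp.add ((h1 x hx).ofReal_comp.const_mul I)).congr_deriv ?_
      rw [hrhs _ x hx]
      simp only [Complex.add_re, Complex.add_im, Complex.ofReal_re, Complex.ofReal_im, Complex.re_mul_ofReal,
        Complex.im_mul_ofReal, Complex.I_re, Complex.I_im, zero_mul, one_mul, add_zero, zero_add]
      congr 3 <;> linarith)
    (by
      intro n
      rw [hconj, him]
      exact (heig n).2.1)
    (by
      intro n
      rw [him]
      exact (heig n).2.2)
    hord
    (by
      intro μ hμ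
      refine hcomplete μ ⟨fun x => (D.Z μ x).im, fun x => (D.Z μ x).re, ?_, ⟨a, hma, ?_⟩, ?_, ?_⟩
      · have hd := fun x (hx : x ∈ Icc a b) => D.hZ μ (x := x) hx
        have cZ := (D.cZ μ)
        have cre : Continuous fun x => (D.Z μ x).re := Complex.continuous_re.comp cZ
        have cim : Continuous fun x => (D.Z μ x).im := Complex.continuous_im.comp cZ
        have c1 := hp.continuousOn
        have c2 := hq.continuousOn
        have c3 := ht.continuousOn
        have c4 := hρ.continuousOn
        refine ⟨fun x => -(t x * (D.Z μ x).im + (q x - μ * ρ x) * (D.Z μ x).re),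
          fun x => t x * (D.Z μ x).re + (p x - μ * ρ x) * (D.Z μ x).im, fun x hx => ?_, fun x hx => ?_,
          by fun_prop, by fun_prop, fun x hx => by ring, fun x hx => by ring⟩
        · have h := (hasFDerivAt_iff_hasDerivAt.1
            (Complex.imCLM.hasFDerivAt.comp x (hd x hx).hasFDerivAt)).hasDerivWithinAt (s := Icc a b)
          refine h.congr_deriv ?_
          rw [hrhs _ x hx]; simp
        · have h := (hasFDerivAt_iff_hasDerivAt.1
            (Complex.reCLM.hasFDerivAt.comp x (hd x hx).hasFDerivAt)).hasDerivWithinAt (s := Icc a b)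
          refine h.congr_deriv ?_
          rw [hrhs _ x hx]; simp
      · by_contra! h
        exact D.Z_ne μ a (Complex.ext h.2 h.1)
      · have h1 : (D.Z μ D.a * conj (D.Z μ D.a)).im = 0 := by rw [Complex.mul_conj]; simp
        rw [hconj, him'] at h1
        exact h1
      · rw [him'] at hμ
        exact hμ)
    (by
      intro k n
      rw [← horth, hip _ _ _ _ _ _ (fun _ _ => rfl) (fun _ _ => rfl)])
    hF cF'
  have hCn : ∀ n, D.ip (fun x => (g n x : ℂ) + I * (f n x : ℂ)) F = C n := fun n => by
    rw [hC, hip _ _ _ _ _ _ (fun _ _ => rfl) hFe]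
  simp only [hCn] at hfin
  have hFb : F D.b = (F₂ b : ℂ) + I * (F₁ b : ℂ) := hFe b hmb
  have hre : (F D.b * cexp (I * β)).re = F₂ b * Real.cos β - F₁ b * Real.sin β := by
    rw [hFb, mul_comm I (β : ℂ), Complex.mul_re, Complex.exp_ofReal_mul_I_im, Complex.exp_ofReal_mul_I_re]
    simp
  have hexp : cexp (-(I * β)) = (Real.cos β : ℂ) - I * (Real.sin β : ℂ) := by
    rw [show -(I * (β : ℂ)) = ((-β : ℝ) : ℂ) * I by push_cast; ring, Complex.exp_mul_I,
      ← Complex.ofReal_cos, ← Complex.ofReal_sin, Real.cos_neg, Real.sin_neg]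
    push_cast; ring
  rw [hre, hexp] at hfin
  refine Tendsto.prodMk_nhds ?_ ?_
  · have h := (Complex.continuous_im.tendsto _).comp hfin
    convert h using 1
    · ext N
      simp [D, Complex.im_sum]
    · congr 1
      rw [Complex.im_ofReal_mul]; simp [-Complex.ofReal_cos, -Complex.ofReal_sin]; ring
  · have h := (Complex.continuous_re.tendsto _).comp hfin
    convert h using 1
    · ext N
      simp [D, Complex.re_sum]
    · congr 1
      rw [Complex.re_ofReal_mul]; simp [-Complex.ofReal_cos, -Complex.ofReal_sin]; ring

end DiracAux

/-- At the right endpoint `x = b` the symmetric partial sums converge to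
`(sin²β F₁(b) - sin β cos β F₂(b), -sin β cos β F₁(b) + cos²β F₂(b))`. -/
theorem dirac_expansion_right_endpoint
    (a b : ℝ) (hab : a < b)
    (p q t ρ : ℝ → ℝ)
    (hp : ContDiffOn ℝ 1 p (Set.Icc a b)) (hq : ContDiffOn ℝ 1 q (Set.Icc a b))
    (ht : ContDiffOn ℝ 1 t (Set.Icc a b)) (hρ : ContDiffOn ℝ 1 ρ (Set.Icc a b))
    (hρpos : ∀ x ∈ Set.Icc a b, 0 < ρ x)
    (α β : ℝ) (hα : α ∈ Set.Ico 0 (2 * Real.pi)) (hβ : β ∈ Set.Ico 0 (2 * Real.pi))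
    -- the listing of all eigenvalues with eigenfunctions
    (lam : ℤ → ℝ) (f g : ℤ → ℝ → ℝ)
    (heig : ∀ n : ℤ, SatisfiesDiracSystem a b p q t ρ (lam n) (f n) (g n) ∧
      DiracBC a b α β (f n) (g n))
    (hord : ∀ n : ℤ, lam n ≤ lam (n + 1))
    (hgrow : Filter.Tendsto (fun n : ℤ => |lam n|) Filter.cofinite Filter.atTop)
    (hcomplete : ∀ μ : ℝ, IsDiracEigenvalue a b p q t ρ α β μ → ∃ n, lam n = μ)
    (horth : ∀ m n : ℤ,
      (∫ x in a..b, ρ x * (f m x * f n x + g m x * g n x)) = if m = n then 1 else 0)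
    -- the expanded function and its expansion coefficients
    (F₁ F₂ : ℝ → ℝ)
    (hF₁ : ContDiffOn ℝ 1 F₁ (Set.Icc a b)) (hF₂ : ContDiffOn ℝ 1 F₂ (Set.Icc a b))
    (C : ℤ → ℝ)
    (hC : ∀ n, C n = ∫ x in a..b, ρ x * (f n x * F₁ x + g n x * F₂ x)) :
    Filter.Tendsto
      (fun N : ℕ =>
        ((∑ n ∈ Finset.Icc (-(N : ℤ)) (N : ℤ), C n * f n b),
         (∑ n ∈ Finset.Icc (-(N : ℤ)) (N : ℤ), C n * g n b)))
      Filter.atTop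
      (nhds (Real.sin β ^ 2 * F₁ b - Real.sin β * Real.cos β * F₂ b,
             -(Real.sin β * Real.cos β) * F₁ b + Real.cos β ^ 2 * F₂ b)) := by
  exact DDat.dirac_aux a b hab p q t ρ hp hq ht hρ hρpos α β lam f g heig hord hcomplete horth F₁ F₂ hF₁ hF₂ C hC
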